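/- Let U be a squared four-dimensional Bessel process started at 0, and let τ₁^U := inf{ t ≥ 0 : Ū(t) − U(t) ≥ 1 }, where Ū(t) := sup_{s ∈ [0,t]} U(s). Then for every a > 0, P{ U(τ₁^U) > a } = (a+1) e^{−a}. -/

import Mathlib

open MeasureTheory ProbabilityTheory Real Set Filter

noncomputable section

variable {Ω : Type*} [MeasurableSpace Ω]

/-- A standard one-dimensional Brownian motion (indexed by `ℝ`, with the relevant
properties required for nonnegative times): starts at `0`, has continuous paths,
independent increments, and Gaussian increments of variance `t - s`. -/
structure IsStdBM (P : Measure Ω) (B : ℝ → Ω → ℝ) : Prop where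
  measurable : ∀ t : ℝ, Measurable (B t)
  start : ∀ ω, B 0 ω = 0
  cont : ∀ ω, Continuous fun t => B t ω
  indep : ∀ (n : ℕ) (t : Fin (n + 1) → ℝ), (∀ i, 0 ≤ t i) → Monotone t →
    iIndepFun
      (fun (i : Fin n) ω => B (t i.succ) ω - B (t i.castSucc) ω) P
  gauss : ∀ s t : ℝ, 0 ≤ s → s ≤ t →
    P.map (fun ω => B t ω - B s ω) = gaussianReal 0 (Real.toNNReal (t - s))

/-- A standard `d`-dimensional Brownian motion started at `0`: the coordinate
processes are independent standard one-dimensional Brownian motions. -/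
structure IsStdBMVec (d : ℕ) (P : Measure Ω) (B : ℝ → Ω → EuclideanSpace ℝ (Fin d)) : Prop where
  coord : ∀ i : Fin d, IsStdBM P (fun t ω => B t ω i)
  indepCoord : iIndepFun
    (fun (i : Fin d) ω => fun t : ℝ => B t ω i) P

/-- Last zero of `W` in `[0,1]`. -/
def lastZero (W : ℝ → Ω → ℝ) (ω : Ω) : ℝ := sSup {t ∈ Icc (0:ℝ) 1 | W t ω = 0}

/-- `m` is a standard Brownian meander: obtained from a Brownian motion `W` by
`m s = |W (g + s (1 - g))| / √(1 - g)`, where `g` is the last zero of `W` before time `1`. -/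
def IsBrownianMeander (P : Measure Ω) (m : ℝ → Ω → ℝ) : Prop :=
  ∃ W : ℝ → Ω → ℝ, IsStdBM P W ∧
    ∀ ω, ∀ s ∈ Icc (0:ℝ) 1,
      m s ω = |W (lastZero W ω + s * (1 - lastZero W ω)) ω| / Real.sqrt (1 - lastZero W ω)

/-- Running maximum `X̄(t) = sup_{s ∈ [0,t]} X(s)`. -/
def runMax (X : ℝ → Ω → ℝ) (t : ℝ) (ω : Ω) : ℝ := ⨆ s : Icc (0:ℝ) t, X s ω

/-- Maximal drawdown on `[0,T]` : `sup_{s ∈ [0,T]} (X̄(s) - X(s))`. -/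
def maxDDOn (X : ℝ → Ω → ℝ) (T : ℝ) (ω : Ω) : ℝ := ⨆ s : Icc (0:ℝ) T, (runMax X s ω - X s ω)

/-- Drawdown time `τ_λ^X := inf {t ≥ 0 : X̄(t) - X(t) ≥ λ}`. -/
def ddTime (lam : ℝ) (X : ℝ → Ω → ℝ) (ω : Ω) : ℝ :=
  sInf {t | 0 ≤ t ∧ lam ≤ runMax X t ω - X t ω}

/-- Three-dimensional Bessel process built from a 3-dimensional Brownian motion. -/
def bessel3 (β : ℝ → Ω → EuclideanSpace ℝ (Fin 3)) (t : ℝ) (ω : Ω) : ℝ := ‖β t ω‖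

/-- Squared four-dimensional Bessel process built from a 4-dimensional Brownian motion. -/
def sqBessel4 (γ : ℝ → Ω → EuclideanSpace ℝ (Fin 4)) (t : ℝ) (ω : Ω) : ℝ := ‖γ t ω‖ ^ 2

end

open scoped ENNReal

/-! Since `‖x‖⁻²` is harmonic in `ℝ⁴`, for fixed `k` the process `eᵏ (1 - (k - 1) / U(t))` is a
local martingale away from `0`, and its derivative in `k` vanishes at `k = U(t)`. Hence, with
`K = max 1 Ū`, the Azéma–Yor process `e^K (1 - (K - 1) / U)` is still a local martingale. It starts
at `e`, equals `e^b / b` when `U` first reaches the level `b`, and vanishes at a drawdown of size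
one that follows a maximum above `1`. Optional stopping gives
`P{U reaches b before the first drawdown} = b e^{1 - b}`, and `U(τ₁) > a` says that the level
`b = a + 1` is passed before `τ₁`.

No stochastic integral is needed. Along the grid `j / n` the Gaussian increment of the
state contributes an error at most `3 e^b (1 + j / 8)⁻²` in mean, uniformly in `n`, and each such
error tends to `0` as `n → ∞`; the updates of the maximum contribute at most the sum of their
squares. The lower bound on the probability is obtained for drawdowns of size larger than one, for
which the stopped value is eventually nonpositive, and transferred by Brownian scaling. -/

noncomputable section

open scoped Topology

/-! ### The Azéma–Yor function -/

section AzemaYor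

/-- The Azéma–Yor function `eᵏ (1 - (k - 1) / x)` of a state `x` and a running maximum `k`. Below
`x = (k - 1) / 4` it is frozen, which keeps it bounded; only states close to or above `k - 1`
matter. -/
def azemaYor (x k : ℝ) : ℝ := exp k * (1 - (k - 1) / max x ((k - 1) / 4))

lemma measurable_azemaYor : Measurable fun p : ℝ × ℝ ↦ azemaYor p.1 p.2 := by
  unfold azemaYor
  fun_prop

@[simp] lemma azemaYor_one (x : ℝ) : azemaYor x 1 = exp 1 := by simp [azemaYor]

lemma azemaYor_of_le {x k : ℝ} (hx : (k - 1) / 4 ≤ x) :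
    azemaYor x k = exp k * (1 - (k - 1) / x) := by
  rw [azemaYor, max_eq_left hx]

lemma abs_azemaYor_le {x k b : ℝ} (hk : 1 ≤ k) (hb : k ≤ b) : |azemaYor x k| ≤ 3 * exp b := by
  have ratio_nonneg : 0 ≤ (k - 1) / max x ((k - 1) / 4) :=
    div_nonneg (by linarith) (le_max_of_le_right (by linarith))
  have ratio_le : (k - 1) / max x ((k - 1) / 4) ≤ 4 := by
    refine div_le_of_le_mul₀ (le_max_of_le_right (by linarith)) (by norm_num) ?_
    linarith [le_max_right x ((k - 1) / 4)]
  rw [azemaYor, abs_mul, abs_of_pos (exp_pos k), mul_comm]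
  gcongr
  rw [abs_le]
  constructor <;> linarith

lemma azemaYor_nonpos {x k : ℝ} (hk : 1 < k) (hx : x ≤ k - 1) : azemaYor x k ≤ 0 := by
  refine mul_nonpos_of_nonneg_of_nonpos (exp_pos k).le (sub_nonpos.2 ?_)
  rw [one_le_div (lt_max_of_lt_right (by linarith))]
  exact max_le hx (by linarith)

lemma neg_le_azemaYor {x k δ : ℝ} (hk : 1 < k) (hδ : 0 ≤ δ) (hx : k - 1 - δ ≤ x) :
    -(exp k * (4 * δ / (k - 1))) ≤ azemaYor x k := by
  set m := max x ((k - 1) / 4) with hm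
  have hxm : x ≤ m := le_max_left _ _
  have hkm : (k - 1) / 4 ≤ m := le_max_right _ _
  have hm0 : 0 < m := by linarith
  have hk0 : 0 < k - 1 := by linarith
  have ratio_le : (k - 1) / m ≤ 1 + 4 * δ / (k - 1) := by
    rw [div_le_iff₀ hm0]
    have : δ ≤ 4 * δ / (k - 1) * m := by
      rw [div_mul_eq_mul_div, le_div_iff₀ hk0]
      nlinarith
    linarith
  rw [azemaYor, ← hm, ← mul_neg]
  gcongr
  linarith

lemma exp_div_le_azemaYor {b x : ℝ} (hb : 1 ≤ b) (hx : b ≤ x) : exp b / b ≤ azemaYor x b := by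
  rw [azemaYor_of_le (by linarith), show exp b / b = exp b * (1 - (b - 1) / b) by field_simp; ring]
  gcongr

lemma azemaYor_le_of_ge {b x : ℝ} (hb : 1 ≤ b) (hx : b ≤ x) :
    azemaYor x b ≤ exp b / b + exp b * (x - b) := by
  have hx0 : 0 < x := by linarith
  rw [azemaYor_of_le (by linarith), show exp b / b + exp b * (x - b) =
    exp b * (1 - (b - 1) / b + (x - b)) by field_simp; ring]
  gcongr
  have : (b - 1) / b - (b - 1) / x ≤ x - b := by
    rw [div_sub_div _ _ (by positivity) (by positivity), div_le_iff₀ (by positivity)]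
    nlinarith [mul_nonneg (sub_nonneg.2 hx) (show 0 ≤ b * x - (b - 1) by nlinarith)]
  linarith

lemma azemaYor_le_azemaYor_right {x k k' : ℝ} (hk : 1 ≤ k) (hkk' : k ≤ k') (hx : k' ≤ x) :
    azemaYor x k ≤ azemaYor x k' := by
  have hx0 : 0 < x := by linarith
  have exp_ge : exp k * (1 + (k' - k)) ≤ exp k' := by
    calc exp k * (1 + (k' - k)) ≤ exp k * exp (k' - k) := by
          gcongr; linarith [add_one_le_exp (k' - k)]
      _ = exp k' := by rw [← exp_add]; ring_nf
  rw [azemaYor_of_le (by linarith), azemaYor_of_le (by linarith), one_sub_div hx0.ne',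
    one_sub_div hx0.ne', ← mul_div_assoc, ← mul_div_assoc]
  refine div_le_div_of_nonneg_right ?_ hx0.le
  nlinarith [mul_le_mul_of_nonneg_right exp_ge (show 0 ≤ x - (k' - 1) by linarith),
    mul_nonneg (exp_pos k).le (mul_nonneg (sub_nonneg.2 hkk') (sub_nonneg.2 hx))]

-- At `x = k` the derivative in `k` vanishes: only a second-order term remains.
lemma azemaYor_sub_le {x k k' : ℝ} (hk : 1 ≤ k) (hkk' : k ≤ k') (hx : k' ≤ x) :
    azemaYor x k' - azemaYor x k ≤ exp k' * (k' - k) * ((x - k) / x) := by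
  have hx0 : 0 < x := by linarith
  have exp_ge : exp k' * (1 - (k' - k)) ≤ exp k := by
    calc exp k' * (1 - (k' - k)) ≤ exp k' * exp (k - k') := by
          gcongr; linarith [add_one_le_exp (k - k')]
      _ = exp k := by rw [← exp_add]; ring_nf
  rw [azemaYor_of_le (by linarith), azemaYor_of_le (by linarith), one_sub_div hx0.ne',
    one_sub_div hx0.ne', ← mul_div_assoc, ← mul_div_assoc, ← mul_div_assoc, ← sub_div]
  gcongr
  nlinarith [mul_le_mul_of_nonneg_right exp_ge (show 0 ≤ x - (k - 1) by linarith)]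

end AzemaYor

/-! ### The stopped Azéma–Yor sequence -/

section StoppedSequence

variable {b : ℝ} {u : ℕ → ℝ} {i j N : ℕ}

/-- The running maximum of a sequence, started from `1` and capped at level `b`. -/
def cappedMax (b : ℝ) (u : ℕ → ℝ) (j : ℕ) : ℝ := min b (max 1 (partialSups u j))

/-- Up to step `j` the sequence has neither reached level `b` nor, once its maximum exceeded `1`,
dropped by `1` from its maximum. -/
def IsAlive (b : ℝ) (u : ℕ → ℝ) (j : ℕ) : Prop :=
  ∀ i ≤ j, cappedMax b u i < b ∧ (1 < cappedMax b u i → cappedMax b u i - 1 < u i)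

/-- The step at which the sequence stops being alive. -/
def IsExit (b : ℝ) (u : ℕ → ℝ) (i : ℕ) : Prop := ¬ IsAlive b u i ∧ ∀ l < i, IsAlive b u l

open scoped Classical in
/-- The increment of the Azéma–Yor function along an alive step, due to the motion of the state
while the running maximum is kept. -/
def stateIncrement (b : ℝ) (u : ℕ → ℝ) (j : ℕ) : ℝ :=
  if IsAlive b u j then
    azemaYor (u (j + 1)) (cappedMax b u j) - azemaYor (u j) (cappedMax b u j) else 0

open scoped Classical in
/-- The increment of the Azéma–Yor function along an alive step, due to the update of the running
maximum. -/
def maxIncrement (b : ℝ) (u : ℕ → ℝ) (j : ℕ) : ℝ :=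
  if IsAlive b u j then
    azemaYor (u (j + 1)) (cappedMax b u (j + 1)) - azemaYor (u (j + 1)) (cappedMax b u j) else 0

/-- The Azéma–Yor function of the state and the running maximum, stopped at the exit step, after
`N` steps. -/
def stoppedAzemaYor (b : ℝ) (u : ℕ → ℝ) (N : ℕ) : ℝ :=
  azemaYor (u 0) (cappedMax b u 0) +
    ∑ j ∈ Finset.range N, (stateIncrement b u j + maxIncrement b u j)

lemma one_le_cappedMax (hb : 1 ≤ b) (u : ℕ → ℝ) (j : ℕ) : 1 ≤ cappedMax b u j :=
  le_min hb (le_max_left _ _)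

lemma cappedMax_le (b : ℝ) (u : ℕ → ℝ) (j : ℕ) : cappedMax b u j ≤ b := min_le_left _ _

lemma monotone_cappedMax (b : ℝ) (u : ℕ → ℝ) : Monotone (cappedMax b u) := fun _ _ hij ↦
  min_le_min_left _ <| max_le_max_left _ <| partialSups_monotone u hij

lemma cappedMax_le_of_forall_le {C : ℝ} (hC : 1 ≤ C) (h : ∀ i ≤ j, u i ≤ C) :
    cappedMax b u j ≤ C :=
  min_le_of_right_le <| max_le hC <| partialSups_le u j C h

lemma le_cappedMax (hij : i ≤ j) (hj : cappedMax b u j < b) : u i ≤ cappedMax b u j := by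
  have hmax := (min_lt_iff.1 hj).resolve_left (lt_irrefl b)
  rw [cappedMax, min_eq_right hmax.le]
  exact (le_partialSups_of_le u hij).trans (le_max_right _ _)

lemma exists_eq_cappedMax (h1 : 1 < cappedMax b u j) (hj : cappedMax b u j < b) :
    ∃ l ≤ j, u l = cappedMax b u j := by
  have hmax := (min_lt_iff.1 hj).resolve_left (lt_irrefl b)
  have hsup : 1 < partialSups u j := (lt_max_iff.1 (lt_min_iff.1 h1).2).resolve_left (lt_irrefl 1)
  obtain ⟨l, hl, hlu⟩ := exists_partialSups_eq u j
  exact ⟨l, hl, by rw [cappedMax, min_eq_right hmax.le, max_eq_right hsup.le, hlu]⟩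

lemma cappedMax_succ (b : ℝ) (u : ℕ → ℝ) (j : ℕ) :
    cappedMax b u (j + 1) = min b (max (cappedMax b u j) (u (j + 1))) := by
  rw [cappedMax, cappedMax, partialSups_add_one, ← max_assoc, max_min_distrib_right, ← min_assoc,
    min_eq_left (le_max_left b _)]

lemma IsAlive.mono (h : IsAlive b u j) (hij : i ≤ j) : IsAlive b u i :=
  fun l hl ↦ h l (hl.trans hij)

lemma not_isAlive_of_le (hj : b ≤ u j) : ¬ IsAlive b u j := fun h ↦
  absurd (le_cappedMax le_rfl (h j le_rfl).1) (by linarith [(h j le_rfl).1])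

lemma exists_isExit (hj : ¬ IsAlive b u j) : ∃ i ≤ j, IsExit b u i := by
  classical
  have hex : ∃ j, ¬ IsAlive b u j := ⟨j, hj⟩
  exact ⟨Nat.find hex, Nat.find_le hj, Nat.find_spec hex,
    fun l hl ↦ not_not.1 (Nat.find_min hex hl)⟩

lemma IsExit.le_or_le_sub_one (h : IsExit b u i) (hb : 1 < b) :
    b ≤ u i ∧ cappedMax b u i = b ∨
      1 < cappedMax b u i ∧ cappedMax b u i < b ∧ u i ≤ cappedMax b u i - 1 := by
  rcases (cappedMax_le b u i).eq_or_lt with hK | hK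
  · obtain ⟨l, hl, hlu⟩ := exists_partialSups_eq u i
    have hbl : b ≤ u l := by
      have hmax : b ≤ max 1 (partialSups u i) := hK.symm.le.trans (min_le_right _ _)
      exact hlu ▸ (le_max_iff.1 hmax).resolve_left hb.not_ge
    obtain rfl | hli := hl.eq_or_lt
    · exact .inl ⟨hbl, hK⟩
    · exact absurd (h.2 l hli) (not_isAlive_of_le hbl)
  · have hdrop : ¬ (cappedMax b u i < b ∧ (1 < cappedMax b u i → cappedMax b u i - 1 < u i)) :=
      fun hi ↦ h.1 fun l hl ↦ hl.eq_or_lt.elim (· ▸ hi) fun hl ↦ h.2 l hl l le_rfl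
    push Not at hdrop
    exact .inr ⟨(hdrop hK).1, hK, (hdrop hK).2⟩

lemma IsExit.exists_pred (h : IsExit b u i) (h1 : 1 < cappedMax b u i)
    (hK : cappedMax b u i < b) (hu : u i ≤ cappedMax b u i - 1) :
    ∃ j, i = j + 1 ∧ cappedMax b u i - 1 < u j := by
  obtain _ | j := i
  · obtain ⟨l, hl, hlu⟩ := exists_eq_cappedMax h1 hK
    obtain rfl := Nat.le_zero.1 hl
    linarith
  · have hj : cappedMax b u (j + 1) = cappedMax b u j := by
      rw [cappedMax_succ] at hK hu ⊢
      grind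
    exact ⟨j, rfl, hj ▸ (h.2 j (Nat.lt_succ_self j) j le_rfl).2 (hj ▸ h1)⟩

lemma stateIncrement_add_maxIncrement (h : IsAlive b u j) :
    stateIncrement b u j + maxIncrement b u j =
      azemaYor (u (j + 1)) (cappedMax b u (j + 1)) - azemaYor (u j) (cappedMax b u j) := by
  rw [stateIncrement, maxIncrement, if_pos h, if_pos h]
  ring

lemma stoppedAzemaYor_of_forall_isAlive (h : ∀ j < N, IsAlive b u j) :
    stoppedAzemaYor b u N = azemaYor (u N) (cappedMax b u N) := by
  rw [stoppedAzemaYor, Finset.sum_congr rfl fun j hj ↦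
    stateIncrement_add_maxIncrement (h j (Finset.mem_range.1 hj)),
    Finset.sum_range_sub fun j ↦ azemaYor (u j) (cappedMax b u j)]
  ring

lemma IsExit.stoppedAzemaYor_eq (h : IsExit b u i) (hiN : i ≤ N) :
    stoppedAzemaYor b u N = azemaYor (u i) (cappedMax b u i) := by
  rw [← stoppedAzemaYor_of_forall_isAlive h.2, stoppedAzemaYor, stoppedAzemaYor,
    ← Finset.sum_subset (Finset.range_subset_range.2 hiN)]
  intro j _ hj
  have hna : ¬ IsAlive b u j := fun ha ↦ h.1 (ha.mono (by simpa using hj))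
  simp [stateIncrement, maxIncrement, hna]

lemma abs_stoppedAzemaYor_le (hb : 1 ≤ b) (u : ℕ → ℝ) (N : ℕ) :
    |stoppedAzemaYor b u N| ≤ 3 * exp b := by
  by_cases h : ∀ j < N, IsAlive b u j
  · rw [stoppedAzemaYor_of_forall_isAlive h]
    exact abs_azemaYor_le (one_le_cappedMax hb u N) (cappedMax_le b u N)
  · push Not at h
    obtain ⟨j, hj, hna⟩ := h
    obtain ⟨i, hij, hi⟩ := exists_isExit hna
    rw [hi.stoppedAzemaYor_eq (hij.trans hj.le)]
    exact abs_azemaYor_le (one_le_cappedMax hb u i) (cappedMax_le b u i)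

lemma stoppedAzemaYor_eq_add (hb : 1 ≤ b) (hu : u 0 ≤ 1) (N : ℕ) :
    stoppedAzemaYor b u N = exp 1 + ∑ j ∈ Finset.range N, stateIncrement b u j +
      ∑ j ∈ Finset.range N, maxIncrement b u j := by
  have hK : cappedMax b u 0 = 1 := by simp [cappedMax, hu, hb]
  rw [stoppedAzemaYor, hK, azemaYor_one, Finset.sum_add_distrib, add_assoc]

lemma maxIncrement_nonneg (hb : 1 ≤ b) (u : ℕ → ℝ) (j : ℕ) : 0 ≤ maxIncrement b u j := by
  unfold maxIncrement
  split_ifs with h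
  · rcases le_or_gt (u (j + 1)) (cappedMax b u j) with hle | hgt
    · rw [cappedMax_succ, max_eq_left hle, min_eq_right (cappedMax_le b u j), sub_self]
    · refine sub_nonneg.2 (azemaYor_le_azemaYor_right (one_le_cappedMax hb u j)
        (monotone_cappedMax b u j.le_succ) ?_)
      rw [cappedMax_succ, max_eq_right hgt.le]
      exact min_le_right _ _
  · exact le_rfl

lemma maxIncrement_le (hb : 1 ≤ b) {c : ℝ} (hc : 0 ≤ c)
    (h : IsAlive b u j → min 1 |u (j + 1) - u j| ≤ c) :
    maxIncrement b u j ≤ exp b * c * (cappedMax b u (j + 1) - cappedMax b u j) := by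
  have hK := sub_nonneg.2 (monotone_cappedMax b u j.le_succ)
  unfold maxIncrement
  split_ifs with ha
  swap
  · positivity
  rcases le_or_gt (u (j + 1)) (cappedMax b u j) with hle | hgt
  · rw [cappedMax_succ, max_eq_left hle, min_eq_right (cappedMax_le b u j)]
    simp
  have hK1 := one_le_cappedMax hb u j
  have hx : cappedMax b u (j + 1) ≤ u (j + 1) := by
    rw [cappedMax_succ, max_eq_right hgt.le]
    exact min_le_right _ _
  have overshoot : (u (j + 1) - cappedMax b u j) / u (j + 1) ≤ c := by
    refine (le_min ?_ ?_).trans (h ha)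
    · rw [div_le_one (by linarith)]
      linarith
    · have hu := le_cappedMax le_rfl (ha j le_rfl).1
      exact (div_le_self (by linarith) (by linarith)).trans
        ((by linarith : _ ≤ u (j + 1) - u j).trans (le_abs_self _))
  calc azemaYor (u (j + 1)) (cappedMax b u (j + 1)) - azemaYor (u (j + 1)) (cappedMax b u j)
      ≤ exp (cappedMax b u (j + 1)) * (cappedMax b u (j + 1) - cappedMax b u j) *
          ((u (j + 1) - cappedMax b u j) / u (j + 1)) :=
        azemaYor_sub_le hK1 (sub_nonneg.1 hK) hx
    _ ≤ exp b * (cappedMax b u (j + 1) - cappedMax b u j) * c := by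
        gcongr
        · exact div_nonneg (by linarith) (by linarith)
        · exact cappedMax_le b u _
    _ = _ := by ring

lemma sum_maxIncrement_le (hb : 1 ≤ b) {c : ℝ} (hc : 0 ≤ c)
    (h : ∀ j, IsAlive b u j → min 1 |u (j + 1) - u j| ≤ c) (N : ℕ) :
    ∑ j ∈ Finset.range N, maxIncrement b u j ≤ exp b * c * b := by
  calc ∑ j ∈ Finset.range N, maxIncrement b u j
      ≤ ∑ j ∈ Finset.range N, exp b * c * (cappedMax b u (j + 1) - cappedMax b u j) :=
        Finset.sum_le_sum fun j _ ↦ maxIncrement_le hb hc (h j)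
    _ = exp b * c * (cappedMax b u N - cappedMax b u 0) := by
        rw [← Finset.mul_sum, Finset.sum_range_sub]
    _ ≤ exp b * c * b := by
        gcongr
        linarith [cappedMax_le b u N, one_le_cappedMax hb u 0]

end StoppedSequence

/-! ### Drawdowns of a continuous path -/

section Drawdown

variable {lam a : ℝ} {f : ℝ → ℝ}

/-- The times at which a path on `[0, ∞)` lies at least `lam` below an earlier value. -/
def drawdownTimes (lam : ℝ) (f : ℝ → ℝ) : Set ℝ := {t | ∃ s ∈ Icc 0 t, lam ≤ f s - f t}

/-- The path exceeds `a` no later than its first drawdown of size `lam`. -/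
def PassesBeforeDrawdown (lam : ℝ) (f : ℝ → ℝ) (a : ℝ) : Prop :=
  ∀ t ∈ drawdownTimes lam f, ∃ r ∈ Icc 0 t, a < f r

lemma ddTime_eq_sInf_drawdownTimes {Ω : Type*} {X : ℝ → Ω → ℝ} {ω : Ω}
    (hX : Continuous fun t ↦ X t ω) :
    ddTime lam X ω = sInf (drawdownTimes lam fun t ↦ X t ω) := by
  unfold ddTime
  congr 1
  ext t
  have hcompact : IsCompact (range fun s : Icc (0 : ℝ) t ↦ X s ω) :=
    isCompact_range (hX.comp continuous_subtype_val)
  constructor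
  · rintro ⟨ht, h⟩
    have : Nonempty (Icc (0 : ℝ) t) := ⟨⟨0, le_rfl, ht⟩⟩
    obtain ⟨s, hs⟩ := hcompact.sSup_mem (range_nonempty _)
    exact ⟨s, s.2, h.trans_eq (congrArg (· - X t ω) hs.symm)⟩
  · rintro ⟨s, hs, h⟩
    exact ⟨hs.1.trans hs.2, h.trans (sub_le_sub_right (le_ciSup hcompact.bddAbove ⟨s, hs⟩) _)⟩

lemma isClosed_drawdownTimes (hf : Continuous f) : IsClosed (drawdownTimes lam f) := by
  have himage : drawdownTimes lam f =
      Ici 0 ∩ Prod.snd '' {p : Icc (0 : ℝ) 1 × ℝ | lam ≤ f (p.1 * p.2) - f p.2} := by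
    ext t
    constructor
    · rintro ⟨s, ⟨hs, hst⟩, h⟩
      refine ⟨hs.trans hst, ⟨⟨s / t, div_nonneg hs (hs.trans hst), div_le_one_of_le₀ hst
        (hs.trans hst)⟩, t⟩, ?_, rfl⟩
      rcases (hs.trans hst).eq_or_lt with rfl | ht
      · simpa [le_antisymm hst hs] using h
      · simpa [div_mul_cancel₀ s ht.ne'] using h
    · rintro ⟨ht, ⟨⟨s, hs⟩, _⟩, h, rfl⟩
      exact ⟨s * _, ⟨mul_nonneg hs.1 ht, mul_le_of_le_one_left ht hs.2⟩, h⟩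
  rw [himage]
  refine isClosed_Ici.inter (isClosedMap_snd_of_compactSpace _ ?_)
  exact isClosed_le (by fun_prop) (by fun_prop)

lemma isLeast_sInf_drawdownTimes (hf : Continuous f) (h : (drawdownTimes lam f).Nonempty) :
    IsLeast (drawdownTimes lam f) (sInf (drawdownTimes lam f)) := by
  have hbdd : BddBelow (drawdownTimes lam f) := ⟨0, fun _ ⟨_, hs, _⟩ ↦ hs.1.trans hs.2⟩
  exact ⟨(isClosed_drawdownTimes hf).csInf_mem h hbdd, fun t ht ↦ csInf_le hbdd ht⟩

lemma le_add_of_isLeast_drawdownTimes (hlam : 0 ≤ lam) (hf : Continuous f) {τ r : ℝ}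
    (hτ : IsLeast (drawdownTimes lam f) τ) (hr : r ∈ Icc 0 τ) : f r ≤ f τ + lam := by
  by_contra! hlt
  have hrτ : r < τ := hr.2.lt_of_ne fun h ↦ by subst h; linarith
  have hnear : ∀ᶠ t in 𝓝[<] τ, f t + lam < f r :=
    ((hf.tendsto τ).mono_left nhdsWithin_le_nhds |>.add_const lam).eventually_lt_const hlt
  obtain ⟨t, ht, hrt, htτ⟩ := (hnear.and (Ioo_mem_nhdsLT hrτ)).exists
  exact htτ.not_ge (hτ.2 ⟨r, ⟨hr.1, hrt.le⟩, by linarith⟩)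

lemma lt_apply_iff_passesBeforeDrawdown (hlam : 0 ≤ lam) (hf : Continuous f) {τ : ℝ}
    (hτ : IsLeast (drawdownTimes lam f) τ) :
    a < f τ ↔ PassesBeforeDrawdown lam f (a + lam) := by
  constructor
  · intro ha t ht
    obtain ⟨s, hs, hle⟩ := hτ.1
    exact ⟨s, ⟨hs.1, hs.2.trans (hτ.2 ht)⟩, by linarith⟩
  · intro h
    obtain ⟨r, hr, hlt⟩ := h τ hτ.1
    linarith [le_add_of_isLeast_drawdownTimes hlam hf hτ hr]

lemma PassesBeforeDrawdown.exists_lt_apply (hlam : 0 < lam) (hf : Continuous f)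
    (h : PassesBeforeDrawdown lam f a) (hunbdd : ∃ T ≥ 0, a < f T) :
    ∃ T ≥ 0, a < f T ∧ ∀ t ≤ T, t ∉ drawdownTimes lam f := by
  rcases (drawdownTimes lam f).eq_empty_or_nonempty with hempty | hne
  · obtain ⟨T, hT, haT⟩ := hunbdd
    exact ⟨T, hT, haT, fun t _ ↦ hempty ▸ notMem_empty t⟩
  · obtain ⟨⟨s, hs, hle⟩, hleast⟩ := isLeast_sInf_drawdownTimes hf hne
    obtain ⟨r, hr, har⟩ := h _ ⟨s, hs, hle⟩
    have before {T : ℝ} (hT : T < sInf (drawdownTimes lam f)) (t : ℝ) (ht : t ≤ T) :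
        t ∉ drawdownTimes lam f := fun htd ↦ (ht.trans_lt hT).not_ge (hleast htd)
    rcases hr.2.eq_or_lt with hrτ | hrτ
    · rw [hrτ] at har
      exact ⟨s, hs.1, by linarith, before (hs.2.lt_of_ne fun hsτ ↦ by rw [hsτ] at hle; linarith)⟩
    · exact ⟨r, hr.1, har, before hrτ⟩

end Drawdown

/-! ### Sampling a continuous path on fine grids -/

section Grid

variable {b T : ℝ} {f : ℝ → ℝ}

/-- The values of a path at the multiples of `1 / n`. -/
def gridSample (f : ℝ → ℝ) (n j : ℕ) : ℝ := f (j / n)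

lemma floor_div_le {t : ℝ} (ht : 0 ≤ t) (n : ℕ) : (⌊t * n⌋₊ : ℝ) / n ≤ t :=
  div_le_of_le_mul₀ n.cast_nonneg ht (Nat.floor_le (by positivity))

lemma le_floor_add_one_div {n : ℕ} (hn : 0 < n) (t : ℝ) : t ≤ ((⌊t * n⌋₊ + 1 : ℕ) : ℝ) / n := by
  rw [le_div_iff₀ (by positivity)]
  exact_mod_cast (Nat.lt_floor_add_one (t * n)).le

lemma tendsto_gridSample_floor (hf : Continuous f) {t : ℝ} (ht : 0 ≤ t) :
    Tendsto (fun n ↦ gridSample f n ⌊t * n⌋₊) atTop (𝓝 (f t)) :=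
  (hf.tendsto t).comp ((tendsto_nat_floor_mul_div_atTop ht).comp tendsto_natCast_atTop_atTop)

lemma eventually_floor_mul_le_sq (t : ℝ) : ∀ᶠ n : ℕ in atTop, ⌊t * n⌋₊ ≤ n ^ 2 := by
  filter_upwards [tendsto_natCast_atTop_atTop.eventually_ge_atTop t] with n hn
  refine Nat.floor_le_of_le ?_
  push_cast
  nlinarith [n.cast_nonneg (α := ℝ)]

lemma eventually_abs_sub_gridSample_lt (hf : Continuous f) (T : ℝ) {η : ℝ} (hη : 0 < η) :
    ∀ᶠ n : ℕ in atTop, ∀ l : ℕ, (l : ℝ) / n ≤ T →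
      ∀ t ∈ Icc ((l : ℝ) / n) ((l + 1 : ℕ) / n), |f t - gridSample f n l| < η := by
  obtain ⟨δ, hδ, hclose⟩ := Metric.uniformContinuousOn_iff.1
    ((isCompact_Icc (a := 0) (b := T + 1)).uniformContinuousOn_of_continuous hf.continuousOn) η hη
  filter_upwards [(tendsto_one_div_atTop_nhds_zero_nat (𝕜 := ℝ)).eventually_lt_const
    (lt_min hδ one_pos)] with n hn l hl t ht
  have hl0 : 0 ≤ (l : ℝ) / n := by positivity
  have hstep : ((l + 1 : ℕ) : ℝ) / n = l / n + 1 / n := by push_cast; ring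
  obtain ⟨hnδ, hn1⟩ := lt_min_iff.1 hn
  obtain ⟨hlt, htl⟩ := ht
  refine hclose t ⟨by linarith, by linarith⟩ _ ⟨hl0, by linarith⟩ ?_
  rw [dist_eq, abs_of_nonneg (by linarith)]
  linarith

lemma eventually_abs_gridSample_succ_sub_lt (hf : Continuous f) (T : ℝ) {η : ℝ} (hη : 0 < η) :
    ∀ᶠ n : ℕ in atTop, ∀ l : ℕ, (l : ℝ) / n ≤ T →
      |gridSample f n (l + 1) - gridSample f n l| < η := by
  filter_upwards [eventually_abs_sub_gridSample_lt hf T hη] with n hn l hl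
  exact hn l hl _ (right_mem_Icc.2 (by gcongr; exact l.le_succ))

lemma eventually_exists_isExit (hf : Continuous f) (hT : 0 ≤ T) (hfT : b < f T) :
    ∀ᶠ n : ℕ in atTop, ∃ i ≤ n ^ 2, (i : ℝ) / n ≤ T ∧ IsExit b (gridSample f n) i := by
  filter_upwards [(tendsto_gridSample_floor hf hT).eventually_const_lt hfT,
    eventually_floor_mul_le_sq T] with n hbn hn
  obtain ⟨i, hi, hexit⟩ := exists_isExit (not_isAlive_of_le hbn.le)
  exact ⟨i, hi.trans hn, (by gcongr : (i : ℝ) / n ≤ ⌊T * n⌋₊ / n).trans (floor_div_le hT n), hexit⟩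

lemma eventually_stoppedAzemaYor_nonpos (hf : Continuous f) (hpos : ∀ t, 0 ≤ f t) (hb : 1 < b)
    {lam A : ℝ} (hlam : 1 < lam) (hA : A < b) (h : ¬ PassesBeforeDrawdown lam f A) :
    ∀ᶠ n : ℕ in atTop, stoppedAzemaYor b (gridSample f n) (n ^ 2) ≤ 0 := by
  simp only [PassesBeforeDrawdown, not_forall, not_exists, not_and, not_lt] at h
  obtain ⟨t, ⟨s, ⟨hs, hst⟩, hdrop⟩, hle⟩ := h
  have ht := hs.trans hst
  filter_upwards [((tendsto_gridSample_floor hf hs).sub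
      (tendsto_gridSample_floor hf ht)).eventually_const_lt (hlam.trans_le hdrop),
    eventually_floor_mul_le_sq t] with n hn hn2
  have hK {i : ℕ} (hi : i ≤ ⌊t * n⌋₊) : cappedMax b (gridSample f n) i < b := by
    refine (cappedMax_le_of_forall_le (le_max_left 1 A) fun l hl ↦ le_max_of_le_right ?_).trans_lt
      (max_lt hb hA)
    exact hle _ ⟨by positivity, (by gcongr; exact hl.trans hi : (l : ℝ) / n ≤ ⌊t * n⌋₊ / n).trans
      (floor_div_le ht n)⟩
  have hdead : ¬ IsAlive b (gridSample f n) ⌊t * n⌋₊ := fun halive ↦ by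
    have hmax := le_cappedMax (Nat.floor_mono (by gcongr : s * n ≤ t * n)) (hK le_rfl)
    have hlast : 0 ≤ gridSample f n ⌊t * n⌋₊ := hpos _
    linarith [(halive _ le_rfl).2 (by linarith)]
  obtain ⟨i, hi, hexit⟩ := exists_isExit hdead
  rw [hexit.stoppedAzemaYor_eq (hi.trans hn2)]
  rcases hexit.le_or_le_sub_one hb with ⟨-, hKb⟩ | ⟨h1, -, hle⟩
  · exact absurd hKb (hK hi).ne
  · exact azemaYor_nonpos h1 hle

lemma eventually_stoppedAzemaYor_le (hf : Continuous f) (hfT : ∃ T ≥ 0, b < f T) (hb : 1 < b)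
    (hf0 : f 0 < b) {η : ℝ} (hη : 0 < η) :
    ∀ᶠ n : ℕ in atTop, stoppedAzemaYor b (gridSample f n) (n ^ 2) ≤ exp b / b + η := by
  obtain ⟨T, hT, hfT⟩ := hfT
  filter_upwards [eventually_exists_isExit hf hT hfT,
    eventually_abs_gridSample_succ_sub_lt hf T (η := η / exp b) (by positivity)]
    with n ⟨i, hi, hiT, hexit⟩ hosc
  rw [hexit.stoppedAzemaYor_eq hi]
  rcases hexit.le_or_le_sub_one hb with ⟨hbu, hKb⟩ | ⟨h1, -, hle⟩
  · obtain _ | l := i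
    · exact absurd hf0 (by simpa [gridSample] using hbu)
    have halive := (hexit.2 l l.lt_succ_self l le_rfl).1
    have hstep := (abs_lt.1 (hosc l ((by gcongr; exact l.le_succ : (l : ℝ) / n ≤ _).trans hiT))).2
    rw [hKb]
    calc azemaYor (gridSample f n (l + 1)) b
        ≤ exp b / b + exp b * (gridSample f n (l + 1) - b) := azemaYor_le_of_ge hb.le hbu
      _ ≤ exp b / b + exp b * (η / exp b) := by
          gcongr
          linarith [le_cappedMax le_rfl halive]
      _ = exp b / b + η := by field_simp
  · have := azemaYor_nonpos h1 hle
    have : 0 < exp b / b := by positivity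
    linarith

lemma eventually_le_stoppedAzemaYor (hf : Continuous f) (hfT : ∃ T ≥ 0, b < f T) (hb : 1 < b)
    (h : PassesBeforeDrawdown 1 f b) :
    ∀ᶠ n : ℕ in atTop, exp b / b ≤ stoppedAzemaYor b (gridSample f n) (n ^ 2) := by
  obtain ⟨T, hT, hbT, hno⟩ := h.exists_lt_apply one_pos hf hfT
  filter_upwards [eventually_exists_isExit hf hT hbT] with n ⟨i, hi, hiT, hexit⟩
  rw [hexit.stoppedAzemaYor_eq hi]
  rcases hexit.le_or_le_sub_one hb with ⟨hbu, hKb⟩ | ⟨h1, hKb, hle⟩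
  · rw [hKb]
    exact exp_div_le_azemaYor hb.le hbu
  · obtain ⟨l, hl, hlK⟩ := exists_eq_cappedMax h1 hKb
    refine absurd ⟨(l : ℝ) / n, ⟨by positivity, by gcongr⟩, ?_⟩ (hno _ hiT)
    change 1 ≤ gridSample f n l - gridSample f n i
    linarith

lemma eventually_neg_le_stoppedAzemaYor (hf : Continuous f) (hfT : ∃ T ≥ 0, b < f T) (hb : 1 < b)
    {ε : ℝ} (hε : 0 < ε) (h : PassesBeforeDrawdown 1 f (1 + ε)) {η : ℝ} (hη : 0 < η) :
    ∀ᶠ n : ℕ in atTop, -η ≤ stoppedAzemaYor b (gridSample f n) (n ^ 2) := by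
  obtain ⟨T, hT, hfT⟩ := hfT
  have hδ : 0 < min (ε / 2) (η * ε / (8 * exp b)) := by positivity
  filter_upwards [eventually_exists_isExit hf hT hfT, eventually_abs_sub_gridSample_lt hf T hδ,
    eventually_abs_gridSample_succ_sub_lt hf T hδ, eventually_gt_atTop 0]
    with n ⟨i, hi, hiT, hexit⟩ hosc hstep hn
  rw [hexit.stoppedAzemaYor_eq hi]
  rcases hexit.le_or_le_sub_one hb with ⟨hbu, hKb⟩ | ⟨h1, hKb, hle⟩
  · rw [hKb]
    have : 0 < exp b / b := by positivity
    linarith [exp_div_le_azemaYor hb.le hbu]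
  set k := cappedMax b (gridSample f n) i with hk
  have hk_ge : 1 + ε / 2 ≤ k := by
    obtain ⟨l, hl, hlK⟩ := exists_eq_cappedMax h1 hKb
    have hdd : (i : ℝ) / n ∈ drawdownTimes 1 f := by
      refine ⟨(l : ℝ) / n, ⟨by positivity, by gcongr⟩, ?_⟩
      change 1 ≤ gridSample f n l - gridSample f n i
      linarith
    obtain ⟨r, ⟨hr, hri⟩, hfr⟩ := h _ hdd
    have hfloor : ⌊r * n⌋₊ ≤ i := Nat.floor_le_of_le ((le_div_iff₀ (by positivity)).1 hri)
    have hclose := hosc ⌊r * n⌋₊ ((floor_div_le hr n).trans (hri.trans hiT)) r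
      ⟨floor_div_le hr n, le_floor_add_one_div hn r⟩
    linarith [(abs_lt.1 hclose).2, le_cappedMax hfloor hKb,
      min_le_left (ε / 2) (η * ε / (8 * exp b))]
  obtain ⟨j, rfl, hj⟩ := hexit.exists_pred h1 hKb hle
  have hdown := (abs_lt.1 (hstep j ((by gcongr; exact j.le_succ : (j : ℝ) / n ≤ _).trans hiT))).1
  refine le_trans (neg_le_neg ?_) (neg_le_azemaYor (δ := η * ε / (8 * exp b)) h1 (by positivity)
    (by linarith [min_le_right (ε / 2) (η * ε / (8 * exp b))]))
  calc exp k * (4 * (η * ε / (8 * exp b)) / (k - 1))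
      ≤ exp b * (4 * (η * ε / (8 * exp b)) / (ε / 2)) := by
        gcongr
        linarith
    _ = η := by field_simp; norm_num

lemma tendsto_sum_maxIncrement_gridSample (hf : Continuous f) (hfT : ∃ T ≥ 0, b < f T)
    (hb : 1 ≤ b) :
    Tendsto (fun n ↦ ∑ j ∈ Finset.range (n ^ 2), maxIncrement b (gridSample f n) j)
      atTop (𝓝 0) := by
  obtain ⟨T, hT, hfT⟩ := hfT
  refine tendsto_order.2 ⟨fun η hη ↦ .of_forall fun n ↦ hη.trans_le <|
    Finset.sum_nonneg fun j _ ↦ maxIncrement_nonneg hb _ j, fun η hη ↦ ?_⟩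
  have hc : 0 < η / (2 * exp b * b) := by positivity
  filter_upwards [eventually_exists_isExit hf hT hfT,
    eventually_abs_gridSample_succ_sub_lt hf T hc] with n ⟨i, _, hiT, hexit⟩ hosc
  refine (sum_maxIncrement_le hb hc.le (fun j hj ↦ ?_) _).trans_lt
    (by field_simp; norm_num : exp b * (η / (2 * exp b * b)) * b < η)
  have hji : j ≤ i := le_of_not_gt fun hij ↦ hexit.1 (hj.mono hij.le)
  exact (min_le_right _ _).trans (hosc j ((by gcongr : (j : ℝ) / n ≤ i / n).trans hiT)).le

end Grid

/-! ### Gaussian averages of the inverse square norm in dimension four -/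

section Gaussian

variable {l L σ x y s q u k : ℝ}

lemma integrable_of_forall_abs_le {α : Type*} [MeasurableSpace α] {μ : Measure α}
    [IsFiniteMeasure μ] {g : α → ℝ} (hg : Measurable g) {C : ℝ} (h : ∀ a, |g a| ≤ C) :
    Integrable g μ :=
  .of_bound hg.aestronglyMeasurable C (ae_of_all _ h)

lemma one_add_two_mul_mul_sq_pos (hl : 0 ≤ l) (σ : ℝ) : 0 < 1 + 2 * l * σ ^ 2 := by positivity

lemma integral_exp_neg_mul_add_mul_sq_gaussianReal (hl : 0 ≤ l) (x σ : ℝ) :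
    ∫ z, exp (-l * (x + σ * z) ^ 2) ∂gaussianReal 0 1 =
      (√(1 + 2 * l * σ ^ 2))⁻¹ * exp (-l * x ^ 2 / (1 + 2 * l * σ ^ 2)) := by
  set D := 1 + 2 * l * σ ^ 2 with hD
  have hD0 : 0 < D := one_add_two_mul_mul_sq_pos hl σ
  have complete_square (z : ℝ) : gaussianPDFReal 0 1 z • exp (-l * (x + σ * z) ^ 2) =
      (√(2 * π))⁻¹ * exp (-l * x ^ 2 / D) * exp (-(D / 2) * (z + 2 * l * σ * x / D) ^ 2) := by
    have hexp : -(z - 0) ^ 2 / (2 * 1) + -l * (x + σ * z) ^ 2 =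
        -l * x ^ 2 / D + -(D / 2) * (z + 2 * l * σ * x / D) ^ 2 := by
      field_simp
      rw [hD]
      ring
    rw [gaussianPDFReal, NNReal.coe_one, mul_one, smul_eq_mul, mul_assoc, mul_assoc, ← exp_add,
      ← exp_add, hexp]
  simp_rw [integral_gaussianReal_eq_integral_smul one_ne_zero, complete_square]
  rw [integral_const_mul, integral_add_right_eq_self fun z ↦ exp (-(D / 2) * z ^ 2),
    integral_gaussian, mul_right_comm, ← sqrt_inv, ← sqrt_mul (by positivity), ← sqrt_inv]
  congr 3
  field_simp

lemma integral_exp_neg_mul_norm_add_smul_sq_stdGaussian {ι : Type*} [Fintype ι] (hl : 0 ≤ l)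
    (x : EuclideanSpace ℝ ι) (σ : ℝ) :
    ∫ z, exp (-l * ‖x + σ • z‖ ^ 2) ∂stdGaussian (EuclideanSpace ℝ ι) =
      (√(1 + 2 * l * σ ^ 2) ^ Fintype.card ι)⁻¹ *
        exp (-l * ‖x‖ ^ 2 / (1 + 2 * l * σ ^ 2)) := by
  have hprod (z : ι → ℝ) : exp (-l * ‖x + σ • WithLp.toLp 2 z‖ ^ 2) =
      ∏ i, exp (-l * (x i + σ * z i) ^ 2) := by
    simp [← exp_sum, EuclideanSpace.norm_sq_eq, Finset.mul_sum]
  rw [← map_pi_eq_stdGaussian, integral_map (by fun_prop) (by fun_prop)]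
  simp_rw [hprod]
  rw [integral_fintype_prod_eq_prod fun i z ↦ exp (-l * (x i + σ * z) ^ 2)]
  simp_rw [integral_exp_neg_mul_add_mul_sq_gaussianReal hl]
  rw [Finset.prod_mul_distrib, Finset.prod_const, Finset.card_univ, inv_pow, ← exp_sum,
    ← Finset.sum_div, ← Finset.mul_sum, EuclideanSpace.norm_sq_eq]
  simp only [norm_eq_abs, sq_abs]

/-- The truncation at `L` of the Laplace representation `y⁻¹ = ∫₀^∞ exp (-l * y) dl`. -/
def truncInv (L y : ℝ) : ℝ := ∫ l in 0..L, exp (-l * y)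

lemma continuous_truncInv (L : ℝ) : Continuous (truncInv L) :=
  intervalIntegral.continuous_parametric_intervalIntegral_of_continuous' (by fun_prop) _ _

lemma truncInv_nonneg (hL : 0 ≤ L) (y : ℝ) : 0 ≤ truncInv L y :=
  intervalIntegral.integral_nonneg hL fun _ _ ↦ (exp_pos _).le

lemma antitone_truncInv (hL : 0 ≤ L) : Antitone (truncInv L) := fun y y' hy ↦
  intervalIntegral.integral_mono_on hL (Continuous.intervalIntegrable (by fun_prop) _ _)
    (Continuous.intervalIntegrable (by fun_prop) _ _) fun l hl ↦
      exp_le_exp.2 (mul_le_mul_of_nonpos_left hy (neg_nonpos.2 hl.1))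

lemma truncInv_le (hL : 0 ≤ L) (hy : 0 ≤ y) : truncInv L y ≤ L := by
  simpa [truncInv] using antitone_truncInv hL hy

lemma truncInv_eq (L : ℝ) (hy : y ≠ 0) : truncInv L y = (1 - exp (-L * y)) / y := by
  have hprim (l : ℝ) : HasDerivAt (fun l ↦ -exp (-l * y) / y) (exp (-l * y)) l :=
    (((hasDerivAt_neg l).mul_const y).exp.neg.div_const y).congr_deriv (by field_simp)
  rw [truncInv, intervalIntegral.integral_eq_sub_of_hasDerivAt (fun l _ ↦ hprim l)
    (Continuous.intervalIntegrable (by fun_prop) _ _)]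
  simp
  ring

lemma inv_max_le_truncInv_add (hL : 0 ≤ L) (hs : 0 < s) (y : ℝ) :
    (max y s)⁻¹ ≤ truncInv L y + exp (-L * s) / s := by
  have hm : 0 < max y s := lt_max_of_lt_right hs
  calc (max y s)⁻¹ = truncInv L (max y s) + exp (-L * max y s) / max y s := by
        rw [truncInv_eq L hm.ne']
        ring
    _ ≤ truncInv L y + exp (-L * s) / s := by
        refine add_le_add (antitone_truncInv hL (le_max_left _ _))
          (div_le_div₀ (exp_pos _).le (exp_le_exp.2 ?_) hs (le_max_right _ _))
        exact mul_le_mul_of_nonpos_left (le_max_right _ _) (neg_nonpos.2 hL)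

lemma truncInv_sub_le_inv_max (hL : 0 ≤ L) (hs : 0 < s) (hy : 0 ≤ y) :
    truncInv L y - L * exp (L * s) * exp (-L * y) ≤ (max y s)⁻¹ := by
  rcases le_or_gt s y with hsy | hsy
  · rw [max_eq_left hsy, truncInv_eq L (hs.trans_le hsy).ne', sub_div, one_div]
    have : 0 ≤ exp (-L * y) / y := by positivity
    have : 0 ≤ L * exp (L * s) * exp (-L * y) := by positivity
    linarith
  · have hexp : 1 ≤ exp (L * s) * exp (-L * y) := by
      rw [← exp_add]
      exact one_le_exp (by nlinarith)
    have : 0 < (max y s)⁻¹ := inv_pos.2 (lt_max_of_lt_right hs)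
    nlinarith [truncInv_le hL hy]

section DimensionFour

variable {x : EuclideanSpace ℝ (Fin 4)}

local notation "γ₄" => stdGaussian (EuclideanSpace ℝ (Fin 4))

lemma integral_exp_neg_mul_norm_add_smul_sq (hL : 0 ≤ L) (x : EuclideanSpace ℝ (Fin 4)) (σ : ℝ) :
    ∫ z, exp (-L * ‖x + σ • z‖ ^ 2) ∂γ₄ =
      ((1 + 2 * L * σ ^ 2) ^ 2)⁻¹ * exp (-L * ‖x‖ ^ 2 / (1 + 2 * L * σ ^ 2)) := by
  have hpow : √(1 + 2 * L * σ ^ 2) ^ 4 = (1 + 2 * L * σ ^ 2) ^ 2 := by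
    rw [show 4 = 2 * 2 from rfl, pow_mul, sq_sqrt (one_add_two_mul_mul_sq_pos hL σ).le]
  rw [integral_exp_neg_mul_norm_add_smul_sq_stdGaussian hL]
  simp only [Fintype.card_fin, hpow]

lemma integrable_truncInv_norm_add_smul_sq (hL : 0 ≤ L) (x : EuclideanSpace ℝ (Fin 4)) (σ : ℝ) :
    Integrable (fun z ↦ truncInv L (‖x + σ • z‖ ^ 2)) γ₄ :=
  integrable_of_forall_abs_le (C := L) ((continuous_truncInv L).measurable.comp (by fun_prop))
    fun z ↦ by
    rw [abs_of_nonneg (truncInv_nonneg hL _)]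
    exact truncInv_le hL (sq_nonneg _)

lemma integrable_exp_neg_mul_norm_add_smul_sq (hL : 0 ≤ L) (x : EuclideanSpace ℝ (Fin 4))
    (σ : ℝ) : Integrable (fun z ↦ exp (-L * ‖x + σ • z‖ ^ 2)) γ₄ :=
  integrable_of_forall_abs_le (C := 1) (by fun_prop) fun z ↦ by
    rw [abs_exp, exp_le_one_iff]
    exact mul_nonpos_of_nonpos_of_nonneg (neg_nonpos.2 hL) (sq_nonneg _)

lemma integrable_inv_max_norm_add_smul_sq (hs : 0 < s) (x : EuclideanSpace ℝ (Fin 4)) (σ : ℝ) :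
    Integrable (fun z ↦ (max (‖x + σ • z‖ ^ 2) s)⁻¹) γ₄ :=
  integrable_of_forall_abs_le (C := s⁻¹) (by fun_prop) fun z ↦ by
    rw [abs_of_pos (inv_pos.2 (lt_max_of_lt_right hs))]
    exact inv_anti₀ hs (le_max_right _ _)

-- In dimension four the Gaussian factor `(1 + 2lσ²)⁻²` is the derivative of `l / (1 + 2lσ²)`.
lemma integral_truncInv_norm_add_smul_sq (hL : 0 ≤ L) (x : EuclideanSpace ℝ (Fin 4)) (σ : ℝ) :
    ∫ z, truncInv L (‖x + σ • z‖ ^ 2) ∂γ₄ = truncInv (L / (1 + 2 * L * σ ^ 2)) (‖x‖ ^ 2) := by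
  have hint : Integrable (Function.uncurry fun l (z : EuclideanSpace ℝ (Fin 4)) ↦
      exp (-l * ‖x + σ • z‖ ^ 2)) (Measure.prod (volume.restrict (uIoc 0 L)) γ₄) := by
    rw [uIoc_of_le hL]
    refine .of_bound (by fun_prop) 1 ?_
    filter_upwards [Measure.quasiMeasurePreserving_fst.ae (ae_restrict_mem measurableSet_Ioc)]
      with p hp
    rw [Function.uncurry_def, norm_eq_abs, abs_exp, exp_le_one_iff]
    exact mul_nonpos_of_nonpos_of_nonneg (neg_nonpos.2 hp.1.le) (sq_nonneg _)
  have hderiv : ∀ l ∈ uIcc 0 L, HasDerivAt (fun l ↦ l / (1 + 2 * l * σ ^ 2))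
      ((1 + 2 * l * σ ^ 2) ^ 2)⁻¹ l := fun l hl ↦ by
    rw [uIcc_of_le hL] at hl
    have hD := (one_add_two_mul_mul_sq_pos hl.1 σ).ne'
    have hden := (((hasDerivAt_id l).const_mul 2).mul_const (σ ^ 2)).const_add 1
    refine ((hasDerivAt_id l).div hden hD).congr_deriv ?_
    rw [id]
    field_simp
    ring
  have hcont : ContinuousOn (fun l ↦ ((1 + 2 * l * σ ^ 2) ^ 2)⁻¹) (uIcc 0 L) := by
    refine ContinuousOn.inv₀ (by fun_prop) fun l hl ↦ ?_
    rw [uIcc_of_le hL] at hl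
    exact pow_ne_zero 2 (one_add_two_mul_mul_sq_pos hl.1 σ).ne'
  calc ∫ z, truncInv L (‖x + σ • z‖ ^ 2) ∂γ₄
      = ∫ l in 0..L, ∫ z, exp (-l * ‖x + σ • z‖ ^ 2) ∂γ₄ :=
        (intervalIntegral_integral_swap hint).symm
    _ = ∫ l in 0..L, exp (-(l / (1 + 2 * l * σ ^ 2)) * ‖x‖ ^ 2) *
          ((1 + 2 * l * σ ^ 2) ^ 2)⁻¹ := by
        refine intervalIntegral.integral_congr fun l hl ↦ ?_
        rw [uIcc_of_le hL] at hl
        rw [integral_exp_neg_mul_norm_add_smul_sq hl.1, mul_comm]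
        congr 2
        ring
    _ = truncInv (L / (1 + 2 * L * σ ^ 2)) (‖x‖ ^ 2) := by
        have := intervalIntegral.integral_comp_mul_deriv
          (g := fun l ↦ exp (-l * ‖x‖ ^ 2)) hderiv hcont (by fun_prop)
        simpa [truncInv] using this

lemma integral_inv_max_norm_add_smul_sq_le (hs : 0 < s) (hx : x ≠ 0) (σ : ℝ) :
    ∫ z, (max (‖x + σ • z‖ ^ 2) s)⁻¹ ∂γ₄ ≤ (‖x‖ ^ 2)⁻¹ := by
  have hlim : Tendsto (fun L ↦ (‖x‖ ^ 2)⁻¹ + exp (-L * s) / s) atTop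
      (𝓝 ((‖x‖ ^ 2)⁻¹ + 0 / s)) := by
    refine ((tendsto_exp_atBot.comp ?_).div_const s).const_add _
    simp_rw [neg_mul]
    exact tendsto_neg_atTop_atBot.comp (tendsto_id.atTop_mul_const hs)
  rw [zero_div, add_zero] at hlim
  refine ge_of_tendsto hlim ?_
  filter_upwards [eventually_ge_atTop 0] with L hL
  calc ∫ z, (max (‖x + σ • z‖ ^ 2) s)⁻¹ ∂γ₄
      ≤ ∫ z, (truncInv L (‖x + σ • z‖ ^ 2) + exp (-L * s) / s) ∂γ₄ :=
        integral_mono (integrable_inv_max_norm_add_smul_sq hs x σ)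
          ((integrable_truncInv_norm_add_smul_sq hL x σ).add (integrable_const _)) fun z ↦
            inv_max_le_truncInv_add hL hs _
    _ = truncInv (L / (1 + 2 * L * σ ^ 2)) (‖x‖ ^ 2) + exp (-L * s) / s := by
        rw [integral_add (integrable_truncInv_norm_add_smul_sq hL x σ) (integrable_const _),
          integral_truncInv_norm_add_smul_sq hL]
        simp
    _ ≤ (‖x‖ ^ 2)⁻¹ + exp (-L * s) / s := by
        rw [truncInv_eq _ (by positivity), inv_eq_one_div]
        gcongr
        linarith [exp_pos (-(L / (1 + 2 * L * σ ^ 2)) * ‖x‖ ^ 2)]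

lemma le_integral_inv_max_norm_add_smul_sq (hs : 0 < s) (hL : 0 ≤ L)
    (x : EuclideanSpace ℝ (Fin 4)) (σ : ℝ) :
    truncInv (L / (1 + 2 * L * σ ^ 2)) (‖x‖ ^ 2) - L * exp (L * s) *
        (((1 + 2 * L * σ ^ 2) ^ 2)⁻¹ * exp (-L * ‖x‖ ^ 2 / (1 + 2 * L * σ ^ 2))) ≤
      ∫ z, (max (‖x + σ • z‖ ^ 2) s)⁻¹ ∂γ₄ := by
  have hexp := (integrable_exp_neg_mul_norm_add_smul_sq hL x σ).const_mul (L * exp (L * s))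
  calc _ = ∫ z, (truncInv L (‖x + σ • z‖ ^ 2) -
          L * exp (L * s) * exp (-L * ‖x + σ • z‖ ^ 2)) ∂γ₄ := by
        rw [integral_sub (integrable_truncInv_norm_add_smul_sq hL x σ) hexp, integral_const_mul,
          integral_truncInv_norm_add_smul_sq hL,
          integral_exp_neg_mul_norm_add_smul_sq hL]
    _ ≤ _ := integral_mono ((integrable_truncInv_norm_add_smul_sq hL x σ).sub hexp)
        (integrable_inv_max_norm_add_smul_sq hs x σ) fun z ↦
          truncInv_sub_le_inv_max hL hs (sq_nonneg _)

end DimensionFour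

lemma truncation_error_le {v : ℝ} (hv : 0 < v) (hq : 0 < q) (hqu : q ≤ u) :
    q * (exp (-(u / v) / 4) / u + (2 * v)⁻¹ * exp ((2 * v)⁻¹ * (q / 4)) *
      ((2 ^ 2)⁻¹ * exp (-(u / v) / 4))) ≤ 3 * exp (-u / (16 * v)) := by
  have hu := hq.trans_le hqu
  set w := u / v with hw
  have hw0 : 0 < w := by positivity
  have hexp : -u / (16 * v) = -(w / 16) := by rw [hw]; field_simp
  have hqv : q * (2 * v)⁻¹ ≤ w / 2 := by
    rw [hw, show u / v / 2 = u * (2 * v)⁻¹ by field_simp]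
    gcongr
  have first : q / u * exp (-w / 4) ≤ 1 * exp (-(w / 16)) := by
    gcongr
    · exact (div_le_one hu).2 hqu
    · linarith
  have absorb : w / 16 * exp (-(w / 16)) ≤ 1 := by
    rw [exp_neg, ← div_eq_mul_inv, div_le_one (exp_pos _)]
    linarith [add_one_le_exp (w / 16)]
  have exponent : exp ((2 * v)⁻¹ * (q / 4)) * exp (-w / 4) ≤
      exp (-(w / 16)) * exp (-(w / 16)) := by
    rw [← exp_add, ← exp_add, exp_le_exp]
    linarith
  have second : q * (2 * v)⁻¹ * (2 ^ 2)⁻¹ * (exp ((2 * v)⁻¹ * (q / 4)) * exp (-w / 4)) ≤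
      2 * exp (-(w / 16)) := by
    calc _ ≤ w / 2 * (2 ^ 2)⁻¹ * (exp (-(w / 16)) * exp (-(w / 16))) := by
          gcongr
      _ = 2 * (w / 16 * exp (-(w / 16))) * exp (-(w / 16)) := by ring
      _ ≤ 2 * 1 * exp (-(w / 16)) := by gcongr
      _ = _ := by ring
  rw [hexp]
  calc _ = q / u * exp (-w / 4) +
        q * (2 * v)⁻¹ * (2 ^ 2)⁻¹ * (exp ((2 * v)⁻¹ * (q / 4)) * exp (-w / 4)) := by ring
    _ ≤ _ := by linarith

lemma abs_integral_azemaYor_sub_le {x : EuclideanSpace ℝ (Fin 4)} (hσ : σ ≠ 0) (hk : 1 < k)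
    (hx : k - 1 < ‖x‖ ^ 2) :
    |∫ z, azemaYor (‖x + σ • z‖ ^ 2) k ∂stdGaussian (EuclideanSpace ℝ (Fin 4)) -
        azemaYor (‖x‖ ^ 2) k| ≤ 3 * exp k * exp (-‖x‖ ^ 2 / (16 * σ ^ 2)) := by
  have hq : 0 < k - 1 := by linarith
  have hs : 0 < (k - 1) / 4 := by linarith
  have hσ2 : 0 < σ ^ 2 := by positivity
  have hx0 : x ≠ 0 := by
    rintro rfl
    norm_num at hx
    linarith
  set I := ∫ z, (max (‖x + σ • z‖ ^ 2) ((k - 1) / 4))⁻¹ ∂stdGaussian (EuclideanSpace ℝ (Fin 4))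
    with hI
  have upper : I ≤ (‖x‖ ^ 2)⁻¹ := integral_inv_max_norm_add_smul_sq_le hs hx0 σ
  have lower : (k - 1) * (‖x‖ ^ 2)⁻¹ - 3 * exp (-‖x‖ ^ 2 / (16 * σ ^ 2)) ≤ (k - 1) * I := by
    have h := le_integral_inv_max_norm_add_smul_sq hs (L := (2 * σ ^ 2)⁻¹) (by positivity) x σ
    rw [show 1 + 2 * (2 * σ ^ 2)⁻¹ * σ ^ 2 = 2 by field_simp; norm_num,
      truncInv_eq _ (by positivity), sub_div, one_div,
      show -((2 * σ ^ 2)⁻¹ / 2) * ‖x‖ ^ 2 = -(‖x‖ ^ 2 / σ ^ 2) / 4 by field_simp; norm_num,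
      show -(2 * σ ^ 2)⁻¹ * ‖x‖ ^ 2 / 2 = -(‖x‖ ^ 2 / σ ^ 2) / 4 by field_simp; norm_num] at h
    have := mul_le_mul_of_nonneg_left h hq.le
    have := truncation_error_le hσ2 hq hx.le
    linarith
  have hmean : ∫ z, azemaYor (‖x + σ • z‖ ^ 2) k ∂stdGaussian (EuclideanSpace ℝ (Fin 4)) =
      exp k * (1 - (k - 1) * I) := by
    simp_rw [azemaYor, div_eq_mul_inv (k - 1) (max _ _)]
    rw [integral_const_mul, integral_sub (integrable_const _)
      ((integrable_inv_max_norm_add_smul_sq hs x σ).const_mul _), integral_const_mul]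
    simp [hI]
  rw [hmean, azemaYor_of_le (by linarith), ← mul_sub, abs_mul, abs_exp, mul_comm 3, mul_assoc,
    div_eq_mul_inv (k - 1)]
  gcongr
  have := mul_le_mul_of_nonneg_left upper hq.le
  rw [abs_le]
  constructor <;> linarith [exp_pos (-‖x‖ ^ 2 / (16 * σ ^ 2))]

end Gaussian

/-! ### Brownian motion -/

section BrownianMotion

open scoped NNReal

lemma indepFun_pi_of_iIndepFun_prodMk {Ω ι α β : Type*} [MeasurableSpace Ω] {P : Measure Ω}
    [IsProbabilityMeasure P] [Finite ι] [MeasurableSpace α] [MeasurableSpace β]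
    {X : ι → Ω → α} {Y : ι → Ω → β} (hX : ∀ i, Measurable (X i)) (hY : ∀ i, Measurable (Y i))
    (hXY : ∀ i, IndepFun (X i) (Y i) P) (h : iIndepFun (fun i ω ↦ (X i ω, Y i ω)) P) :
    IndepFun (fun ω i ↦ X i ω) (fun ω i ↦ Y i ω) P := by
  cases nonempty_fintype ι
  have hX' : Measurable fun ω i ↦ X i ω := measurable_pi_lambda _ hX
  have hY' : Measurable fun ω i ↦ Y i ω := measurable_pi_lambda _ hY
  have hXY' (i : ι) : Measurable fun ω ↦ (X i ω, Y i ω) := (hX i).prodMk (hY i)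
  have (i : ι) := Measure.isProbabilityMeasure_map (μ := P) (hX i).aemeasurable
  have (i : ι) := Measure.isProbabilityMeasure_map (μ := P) (hY i).aemeasurable
  have hXi : iIndepFun X P := h.comp (fun _ ↦ Prod.fst) fun _ ↦ measurable_fst
  have hYi : iIndepFun Y P := h.comp (fun _ ↦ Prod.snd) fun _ ↦ measurable_snd
  have regroup := measurePreserving_arrowProdEquivProdArrow α β ι
    (fun i ↦ P.map (X i)) (fun i ↦ P.map (Y i))
  rw [indepFun_iff_map_prod_eq_prod_map_map hX'.aemeasurable hY'.aemeasurable,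
    (iIndepFun_iff_map_fun_eq_pi_map fun i ↦ (hX i).aemeasurable).1 hXi,
    (iIndepFun_iff_map_fun_eq_pi_map fun i ↦ (hY i).aemeasurable).1 hYi, ← regroup.map_eq]
  simp_rw [← fun i ↦ (indepFun_iff_map_prod_eq_prod_map_map (hX i).aemeasurable
    (hY i).aemeasurable).1 (hXY i)]
  rw [← (iIndepFun_iff_map_fun_eq_pi_map fun i ↦ (hXY' i).aemeasurable).1 h,
    Measure.map_map regroup.measurable (measurable_pi_lambda _ hXY')]
  rfl

variable {Ω : Type*} [MeasurableSpace Ω] {P : Measure Ω} {B : ℝ → Ω → ℝ} {c s t : ℝ}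

lemma IsStdBM.isPreBrownianReal (hB : IsStdBM P B) :
    IsPreBrownianReal (fun (t : ℝ≥0) ↦ B t) P := by
  refine HasIndepIncrements.isPreBrownianReal_of_hasLaw
    (fun t ↦ ⟨(hB.measurable t).aemeasurable, ?_⟩)
    fun n t ht ↦ hB.indep n (fun i ↦ t i) (fun _ ↦ NNReal.coe_nonneg _) fun _ _ hij ↦ ht hij
  simpa [hB.start] using hB.gauss 0 t le_rfl t.2

lemma IsStdBM.indepFun_increment (hB : IsStdBM P B) {ι : Type*} {r : ι → ℝ} (hr : ∀ i, 0 ≤ r i)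
    (hrs : ∀ i, r i ≤ s) (hs : 0 ≤ s) (hst : s ≤ t) :
    IndepFun (fun ω i ↦ B (r i) ω) (fun ω ↦ B t ω - B s ω) P := by
  lift s to ℝ≥0 using hs
  lift r to ι → ℝ≥0 using hr
  have hψ : Measurable fun f : ℝ≥0 → ℝ ↦ f (t - s).toNNReal := measurable_pi_apply _
  convert (hB.isPreBrownianReal.indepFun_shift s).symm.comp
    (φ := fun p i ↦ p ⟨r i, hrs i⟩) (by fun_prop) hψ using 1
  · rfl
  funext ω
  simp [coe_toNNReal _ (sub_nonneg.2 hst)]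

lemma IsStdBM.scale (hB : IsStdBM P B) (hc : 0 < c) :
    IsStdBM P fun t ω ↦ (√c)⁻¹ * B (c * t) ω where
  measurable t := (hB.measurable _).const_mul _
  start ω := by simp [hB.start]
  cont ω := ((hB.cont ω).comp (continuous_const_mul c)).const_mul _
  indep n t h0 ht := by
    have h := (hB.indep n (fun i ↦ c * t i) (fun i ↦ mul_nonneg hc.le (h0 i))
      fun i j hij ↦ mul_le_mul_of_nonneg_left (ht hij) hc.le).comp
      (fun _ x ↦ (√c)⁻¹ * x) fun _ ↦ by fun_prop
    convert h using 2
    ext ω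
    simp [mul_sub]
  gauss s t hs hst := by
    have hmap := gaussianReal_map_const_mul (μ := 0) (v := (c * t - c * s).toNNReal) (√c)⁻¹
    have hinc : Measurable fun ω ↦ B (c * t) ω - B (c * s) ω :=
      (hB.measurable _).sub (hB.measurable _)
    rw [← hB.gauss (c * s) (c * t) (by positivity) (by gcongr),
      Measure.map_map (by fun_prop) hinc] at hmap
    convert hmap using 2
    · ext ω
      simp [mul_sub]
    · simp
    · ext
      have h0 : 0 ≤ t - s := sub_nonneg.2 hst
      rw [← mul_sub, NNReal.coe_mul, coe_toNNReal _ h0, coe_toNNReal _ (by positivity)]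
      simp only [NNReal.coe_mk, inv_pow, sq_sqrt hc.le]
      field_simp

variable {d : ℕ} {γ : ℝ → Ω → EuclideanSpace ℝ (Fin d)}

lemma IsStdBMVec.measurable (hγ : IsStdBMVec d P γ) (t : ℝ) : Measurable (γ t) :=
  (WithLp.measurable_toLp 2 _).comp (measurable_pi_lambda _ fun i ↦ (hγ.coord i).measurable t)

lemma IsStdBMVec.continuous (hγ : IsStdBMVec d P γ) (ω : Ω) : Continuous fun t ↦ γ t ω :=
  (PiLp.continuous_toLp 2 _).comp (continuous_pi fun i ↦ (hγ.coord i).cont ω)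

lemma IsStdBMVec.apply_zero (hγ : IsStdBMVec d P γ) (ω : Ω) : γ 0 ω = 0 := by
  ext i
  simp [(hγ.coord i).start]

lemma IsStdBMVec.scale (hγ : IsStdBMVec d P γ) (hc : 0 < c) :
    IsStdBMVec d P fun t ω ↦ (√c)⁻¹ • γ (c * t) ω where
  coord i := (hγ.coord i).scale hc
  indepCoord := hγ.indepCoord.comp (fun _ p t ↦ (√c)⁻¹ * p (c * t)) fun _ ↦ by fun_prop

variable [IsProbabilityMeasure P]

lemma IsStdBMVec.map_sub (hγ : IsStdBMVec d P γ) (hs : 0 ≤ s) (hst : s ≤ t) :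
    P.map (fun ω ↦ γ t ω - γ s ω) =
      (stdGaussian (EuclideanSpace ℝ (Fin d))).map fun z ↦ √(t - s) • z := by
  have hcoord (i : Fin d) : Measurable fun ω ↦ γ t ω i - γ s ω i :=
    ((hγ.coord i).measurable t).sub ((hγ.coord i).measurable s)
  have hindep : iIndepFun (fun (i : Fin d) ω ↦ γ t ω i - γ s ω i) P :=
    hγ.indepCoord.comp (fun _ p ↦ p t - p s) fun _ ↦ by fun_prop
  have hgauss : gaussianReal 0 (t - s).toNNReal = (gaussianReal 0 1).map (√(t - s) * ·) := by
    rw [gaussianReal_map_const_mul]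
    congr 1
    · simp
    · ext
      simp [coe_toNNReal _ (sub_nonneg.2 hst), sq_sqrt (sub_nonneg.2 hst)]
  have hpi : P.map (fun ω i ↦ γ t ω i - γ s ω i) =
      (Measure.pi fun _ ↦ gaussianReal 0 1).map fun z i ↦ √(t - s) * z i := by
    rw [(iIndepFun_iff_map_fun_eq_pi_map fun i ↦ (hcoord i).aemeasurable).1 hindep]
    simp_rw [fun i ↦ (hγ.coord i).gauss s t hs hst, hgauss]
    exact (Measure.pi_map_pi fun _ ↦ by fun_prop).symm
  rw [← map_pi_eq_stdGaussian, Measure.map_map (by fun_prop) (by fun_prop)]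
  calc P.map (fun ω ↦ γ t ω - γ s ω)
      = (P.map fun ω i ↦ γ t ω i - γ s ω i).map (WithLp.toLp 2) := by
        rw [Measure.map_map (by fun_prop) (measurable_pi_lambda _ hcoord)]
        rfl
    _ = _ := by
        rw [hpi, Measure.map_map (by fun_prop) (by fun_prop)]
        rfl

lemma IsStdBMVec.indepFun_increment (hγ : IsStdBMVec d P γ) {ι : Type*} {r : ι → ℝ}
    (hr : ∀ i, 0 ≤ r i) (hrs : ∀ i, r i ≤ s) (hs : 0 ≤ s) (hst : s ≤ t) :
    IndepFun (fun ω i ↦ γ (r i) ω) (fun ω ↦ γ t ω - γ s ω) P := by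
  have hcoord := indepFun_pi_of_iIndepFun_prodMk
    (fun k ↦ measurable_pi_lambda (fun ω i ↦ γ (r i) ω k) fun i ↦ (hγ.coord k).measurable _)
    (fun k ↦ ((hγ.coord k).measurable t).sub ((hγ.coord k).measurable s))
    (fun k ↦ (hγ.coord k).indepFun_increment hr hrs hs hst)
    (hγ.indepCoord.comp (fun _ p ↦ (fun i ↦ p (r i), p t - p s)) fun _ ↦ by fun_prop)
  exact hcoord.comp (φ := fun q i ↦ WithLp.toLp 2 fun k ↦ q k i) (ψ := WithLp.toLp 2)
    (by fun_prop) (by fun_prop)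

lemma IsStdBMVec.integral_comp_increment (hγ : IsStdBMVec d P γ) {ι : Type*} {r : ι → ℝ}
    (hr : ∀ i, 0 ≤ r i) (hrs : ∀ i, r i ≤ s) (hs : 0 ≤ s) (hst : s ≤ t)
    {F : (ι → EuclideanSpace ℝ (Fin d)) × EuclideanSpace ℝ (Fin d) → ℝ} (hF : Measurable F)
    {C : ℝ} (hC : ∀ q, |F q| ≤ C) :
    ∫ ω, F (fun i ↦ γ (r i) ω, γ t ω - γ s ω) ∂P =
      ∫ ω, ∫ z, F (fun i ↦ γ (r i) ω, √(t - s) • z) ∂stdGaussian (EuclideanSpace ℝ (Fin d)) ∂P := by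
  have hpast : Measurable fun ω i ↦ γ (r i) ω := measurable_pi_lambda _ fun i ↦ hγ.measurable _
  have hinc : Measurable fun ω ↦ γ t ω - γ s ω := (hγ.measurable t).sub (hγ.measurable s)
  have := Measure.isProbabilityMeasure_map (μ := P) hpast.aemeasurable
  have := Measure.isProbabilityMeasure_map (μ := P) hinc.aemeasurable
  have hinner (p : ι → EuclideanSpace ℝ (Fin d)) :
      ∫ y, F (p, y) ∂P.map (fun ω ↦ γ t ω - γ s ω) =
        ∫ z, F (p, √(t - s) • z) ∂stdGaussian (EuclideanSpace ℝ (Fin d)) := by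
    rw [hγ.map_sub hs hst]
    exact integral_map (by fun_prop) (hF.comp measurable_prodMk_left).aestronglyMeasurable
  rw [← integral_map (φ := fun ω ↦ (fun i ↦ γ (r i) ω, γ t ω - γ s ω))
      (hpast.prodMk hinc).aemeasurable hF.aestronglyMeasurable,
    (indepFun_iff_map_prod_eq_prod_map_map hpast.aemeasurable hinc.aemeasurable).1
      (hγ.indepFun_increment hr hrs hs hst),
    integral_prod _ (integrable_of_forall_abs_le hF hC)]
  simp_rw [← hinner]
  exact integral_map hpast.aemeasurable
    hF.stronglyMeasurable.integral_prod_right'.aestronglyMeasurable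

end BrownianMotion

/-! ### The squared Bessel process on a grid -/

section SequenceMeasurability

section Measurability

variable (b : ℝ) {u v : ℕ → ℝ} {j : ℕ}

lemma cappedMax_congr (h : ∀ i ≤ j, u i = v i) : cappedMax b u j = cappedMax b v j := by
  rw [cappedMax, cappedMax, partialSups_apply, partialSups_apply]
  congr 2
  exact Finset.sup'_congr _ rfl fun i hi ↦ h i (by simpa using hi)

lemma isAlive_congr (h : ∀ i ≤ j, u i = v i) : IsAlive b u j ↔ IsAlive b v j :=
  forall₂_congr fun i hi ↦ by
    rw [cappedMax_congr b fun l hl ↦ h l (hl.trans hi), h i hi]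

lemma stateIncrement_congr (h : ∀ i ≤ j + 1, u i = v i) :
    stateIncrement b u j = stateIncrement b v j := by
  have hj : ∀ i ≤ j, u i = v i := fun i hi ↦ h i (hi.trans j.le_succ)
  classical
  rw [stateIncrement, stateIncrement, cappedMax_congr b hj, h (j + 1) le_rfl, hj j le_rfl]
  exact if_congr (isAlive_congr b hj) rfl rfl

open scoped Classical in
lemma stateIncrement_update (u : ℕ → ℝ) (j : ℕ) (y : ℝ) :
    stateIncrement b (Function.update u (j + 1) y) j =
      if IsAlive b u j then azemaYor y (cappedMax b u j) - azemaYor (u j) (cappedMax b u j)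
      else 0 := by
  have hj : ∀ i ≤ j, Function.update u (j + 1) y i = u i := fun i hi ↦
    Function.update_of_ne (by lia) _ _
  rw [stateIncrement, cappedMax_congr b hj, hj j le_rfl, Function.update_self]
  exact if_congr (isAlive_congr b hj) rfl rfl

lemma measurable_cappedMax (j : ℕ) : Measurable fun u ↦ cappedMax b u j := by
  induction j with
  | zero => simp only [cappedMax, partialSups_zero]; fun_prop
  | succ j ih => simp only [cappedMax_succ]; fun_prop

lemma measurableSet_isAlive (j : ℕ) : MeasurableSet {u | IsAlive b u j} := by
  simp only [IsAlive, Set.ofPred_forall, Set.ofPred_and]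
  refine .iInter fun i ↦ .iInter fun _ ↦ ?_
  have hK := measurable_cappedMax b i
  refine (measurableSet_lt hK measurable_const).inter ?_
  simp only [imp_iff_not_or, Set.ofPred_or]
  exact (measurableSet_lt measurable_const hK).compl.union
    (measurableSet_lt (hK.sub_const 1) (measurable_pi_apply i))

lemma measurable_stateIncrement (j : ℕ) : Measurable fun u ↦ stateIncrement b u j := by
  classical
  have hK := measurable_cappedMax b j
  exact .ite (measurableSet_isAlive b j)
    ((measurable_azemaYor.comp (.prodMk (measurable_pi_apply _) hK)).sub
      (measurable_azemaYor.comp (.prodMk (measurable_pi_apply _) hK))) measurable_const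

lemma measurable_maxIncrement (j : ℕ) : Measurable fun u ↦ maxIncrement b u j := by
  classical
  have hu : Measurable fun u : ℕ → ℝ ↦ u (j + 1) := measurable_pi_apply _
  exact .ite (measurableSet_isAlive b j)
    ((measurable_azemaYor.comp (hu.prodMk (measurable_cappedMax b (j + 1)))).sub
      (measurable_azemaYor.comp (hu.prodMk (measurable_cappedMax b j)))) measurable_const

lemma measurable_stoppedAzemaYor (N : ℕ) : Measurable fun u ↦ stoppedAzemaYor b u N := by
  have hK := measurable_cappedMax b 0
  exact (measurable_azemaYor.comp (.prodMk (measurable_pi_apply _) hK)).add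
    (Finset.measurable_sum _ fun j _ ↦
      (measurable_stateIncrement b j).add (measurable_maxIncrement b j))

end Measurability

lemma abs_stateIncrement_le {b : ℝ} (hb : 1 ≤ b) (u : ℕ → ℝ) (j : ℕ) :
    |stateIncrement b u j| ≤ 6 * exp b := by
  have hK (x : ℝ) : |azemaYor x (cappedMax b u j)| ≤ 3 * exp b :=
    abs_azemaYor_le (one_le_cappedMax hb u j) (cappedMax_le b u j)
  unfold stateIncrement
  split_ifs
  · exact (abs_sub _ _).trans (by linarith [hK (u (j + 1)), hK (u j)])
  · simp only [abs_zero]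
    positivity

lemma stateIncrement_of_forall_le_one {b : ℝ} (hb : 1 ≤ b) {u : ℕ → ℝ} {j : ℕ}
    (h : ∀ i ≤ j, u i ≤ 1) : stateIncrement b u j = 0 := by
  have hK : cappedMax b u j = 1 :=
    (cappedMax_le_of_forall_le le_rfl h).antisymm (one_le_cappedMax hb u j)
  simp [stateIncrement, hK]

lemma abs_integral_stateIncrement_update_le {b : ℝ} (hb : 1 ≤ b) {σ : ℝ} (hσ : σ ≠ 0)
    (p : ℕ → EuclideanSpace ℝ (Fin 4)) (j : ℕ) :
    |∫ z, stateIncrement b (Function.update (fun i ↦ ‖p i‖ ^ 2) (j + 1) (‖p j + σ • z‖ ^ 2)) j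
      ∂stdGaussian (EuclideanSpace ℝ (Fin 4))| ≤
        3 * exp b * exp (-‖p j‖ ^ 2 / (16 * σ ^ 2)) := by
  simp only [stateIncrement_update]
  set K := cappedMax b (fun i ↦ ‖p i‖ ^ 2) j
  have hKb : K ≤ b := cappedMax_le b _ j
  have hK1 : 1 ≤ K := one_le_cappedMax hb _ j
  split_ifs with ha
  swap
  · simp only [integral_zero, abs_zero]
    positivity
  obtain hK | hK := hK1.eq_or_lt'
  · simp only [hK, azemaYor_one, sub_self, integral_zero, abs_zero]
    positivity
  · have hint : Integrable (fun z ↦ azemaYor (‖p j + σ • z‖ ^ 2) K)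
        (stdGaussian (EuclideanSpace ℝ (Fin 4))) :=
      integrable_of_forall_abs_le (measurable_azemaYor.comp (.prodMk (by fun_prop)
        measurable_const)) fun _ ↦ abs_azemaYor_le hK1 hKb
    rw [integral_sub hint (integrable_const _), integral_const, probReal_univ, one_smul]
    refine (abs_integral_azemaYor_sub_le hσ hK ((ha j le_rfl).2 hK)).trans ?_
    gcongr

end SequenceMeasurability

section SquaredBessel

variable {Ω : Type*} {b c l t : ℝ}

lemma sqBessel4_nonneg (γ : ℝ → Ω → EuclideanSpace ℝ (Fin 4)) (t : ℝ) (ω : Ω) :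
    0 ≤ sqBessel4 γ t ω :=
  sq_nonneg _

lemma sqBessel4_scale (γ : ℝ → Ω → EuclideanSpace ℝ (Fin 4)) (hc : 0 ≤ c) (t : ℝ) (ω : Ω) :
    sqBessel4 (fun t ω ↦ (√c)⁻¹ • γ (c * t) ω) t ω = sqBessel4 γ (c * t) ω / c := by
  simp only [sqBessel4, norm_smul, norm_inv, norm_eq_abs, mul_pow, sq_abs, inv_pow, sq_sqrt hc]
  field_simp

variable [MeasurableSpace Ω] {P : Measure Ω} {γ : ℝ → Ω → EuclideanSpace ℝ (Fin 4)}

lemma IsStdBMVec.measurable_sqBessel4 (hγ : IsStdBMVec 4 P γ) (t : ℝ) :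
    Measurable (sqBessel4 γ t) :=
  (hγ.measurable t).norm.pow_const 2

lemma IsStdBMVec.continuous_sqBessel4 (hγ : IsStdBMVec 4 P γ) (ω : Ω) :
    Continuous fun t ↦ sqBessel4 γ t ω :=
  (hγ.continuous ω).norm.pow 2

lemma IsStdBMVec.sqBessel4_zero (hγ : IsStdBMVec 4 P γ) (ω : Ω) : sqBessel4 γ 0 ω = 0 := by
  simp [sqBessel4, hγ.apply_zero]

lemma IsStdBMVec.measurable_gridSample_sqBessel4 (hγ : IsStdBMVec 4 P γ) (n : ℕ) :
    Measurable fun ω ↦ gridSample (fun t ↦ sqBessel4 γ t ω) n :=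
  measurable_pi_lambda _ fun _ ↦ hγ.measurable_sqBessel4 _

variable [IsProbabilityMeasure P]

lemma IsStdBMVec.integral_exp_neg_mul_sqBessel4 (hγ : IsStdBMVec 4 P γ) (hl : 0 ≤ l)
    (ht : 0 ≤ t) : ∫ ω, exp (-l * sqBessel4 γ t ω) ∂P = ((1 + 2 * l * t) ^ 2)⁻¹ := by
  have hlaw : P.map (γ t) = (stdGaussian _).map fun z ↦ √t • z := by
    simpa [hγ.apply_zero] using hγ.map_sub le_rfl ht
  calc ∫ ω, exp (-l * sqBessel4 γ t ω) ∂P = ∫ x, exp (-l * ‖x‖ ^ 2) ∂P.map (γ t) := by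
        rw [integral_map (hγ.measurable t).aemeasurable (by fun_prop)]
        rfl
    _ = ∫ z, exp (-l * ‖0 + √t • z‖ ^ 2) ∂stdGaussian (EuclideanSpace ℝ (Fin 4)) := by
        rw [hlaw, integral_map (by fun_prop) (by fun_prop)]
        simp only [zero_add]
    _ = ((1 + 2 * l * t) ^ 2)⁻¹ := by
        rw [integral_exp_neg_mul_norm_add_smul_sq hl, sq_sqrt ht]
        simp

lemma IsStdBMVec.integrable_exp_neg_mul_sqBessel4 (hγ : IsStdBMVec 4 P γ) (hl : 0 ≤ l) (t : ℝ) :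
    Integrable (fun ω ↦ exp (-l * sqBessel4 γ t ω)) P :=
  integrable_of_forall_abs_le (C := 1)
    (measurable_exp.comp ((hγ.measurable_sqBessel4 t).const_mul _)) fun ω ↦ by
      rw [abs_exp, exp_le_one_iff]
      exact mul_nonpos_of_nonpos_of_nonneg (neg_nonpos.2 hl) (sqBessel4_nonneg γ t ω)

lemma IsStdBMVec.ae_exists_lt_sqBessel4 (hγ : IsStdBMVec 4 P γ) :
    ∀ᵐ ω ∂P, ∀ M, ∃ T ≥ 0, M < sqBessel4 γ T ω := by
  have hmeas (n : ℕ) : Measurable fun ω ↦ ENNReal.ofReal (exp (-1 * sqBessel4 γ n ω)) :=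
    (measurable_exp.comp ((hγ.measurable_sqBessel4 n).const_mul _)).ennreal_ofReal
  have hlaplace : Tendsto (fun n : ℕ ↦ ∫⁻ ω, ENNReal.ofReal (exp (-1 * sqBessel4 γ n ω)) ∂P)
      atTop (𝓝 0) := by
    simp_rw [← fun n : ℕ ↦ ofReal_integral_eq_lintegral_ofReal
      (hγ.integrable_exp_neg_mul_sqBessel4 zero_le_one n) (ae_of_all _ fun _ ↦ (exp_pos _).le),
      fun n : ℕ ↦ hγ.integral_exp_neg_mul_sqBessel4 zero_le_one n.cast_nonneg]
    rw [← ENNReal.ofReal_zero]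
    refine ENNReal.tendsto_ofReal (((tendsto_pow_atTop two_ne_zero).comp ?_).inv_tendsto_atTop)
    exact tendsto_atTop_add_const_left _ _
      (tendsto_natCast_atTop_atTop.const_mul_atTop (by norm_num))
  have hliminf : ∫⁻ ω, liminf (fun n : ℕ ↦ ENNReal.ofReal (exp (-1 * sqBessel4 γ n ω))) atTop ∂P
      = 0 :=
    le_antisymm ((lintegral_liminf_le hmeas).trans_eq hlaplace.liminf_eq) zero_le
  filter_upwards [(lintegral_eq_zero_iff (.liminf hmeas)).1 hliminf] with ω hω M
  have hlt : liminf (fun n : ℕ ↦ ENNReal.ofReal (exp (-1 * sqBessel4 γ n ω))) atTop <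
      ENNReal.ofReal (exp (-M)) :=
    hω.trans_lt (ENNReal.ofReal_pos.2 (exp_pos _))
  obtain ⟨n, hn⟩ := (frequently_lt_of_liminf_lt (by isBoundedDefault) hlt).exists
  rw [ENNReal.ofReal_lt_ofReal_iff (exp_pos _), exp_lt_exp] at hn
  exact ⟨n, n.cast_nonneg, by linarith⟩

lemma IsStdBMVec.abs_integral_stateIncrement_le (hγ : IsStdBMVec 4 P γ) (hb : 1 ≤ b) {n : ℕ}
    (hn : 0 < n) (j : ℕ) :
    |∫ ω, stateIncrement b (gridSample (fun t ↦ sqBessel4 γ t ω) n) j ∂P| ≤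
      3 * exp b * ((1 + (j : ℝ) / 8) ^ 2)⁻¹ := by
  have : (0 : ℝ) < n := Nat.cast_pos.2 hn
  let past (ω : Ω) (i : ℕ) : EuclideanSpace ℝ (Fin 4) := γ ((min i j : ℕ) / n) ω
  let F (q : (ℕ → EuclideanSpace ℝ (Fin 4)) × EuclideanSpace ℝ (Fin 4)) : ℝ := stateIncrement b
    (Function.update (fun i ↦ ‖q.1 i‖ ^ 2) (j + 1) (‖q.1 j + q.2‖ ^ 2)) j
  have hF : Measurable F := (measurable_stateIncrement b j).comp
    (measurable_update'.comp (.prodMk (by fun_prop) (by fun_prop)))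
  have hstep (ω : Ω) : stateIncrement b (gridSample (fun t ↦ sqBessel4 γ t ω) n) j =
      F (past ω, γ ((j + 1 : ℕ) / n) ω - γ (j / n) ω) := by
    refine stateIncrement_congr b fun i hi ↦ ?_
    obtain rfl | hij := hi.eq_or_lt
    · simp [past, gridSample, sqBessel4]
    · simp [past, gridSample, sqBessel4, hij.ne, Nat.le_of_lt_succ hij]
  have hσ : ((j + 1 : ℕ) : ℝ) / n - j / n = 1 / n := by
    push_cast
    ring
  have hσ0 : 0 < 1 / (n : ℝ) := by positivity
  have hj : (j : ℝ) / n ≤ (j + 1 : ℕ) / n := by linarith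
  simp_rw [hstep]
  rw [hγ.integral_comp_increment (r := fun i ↦ (min i j : ℕ) / n) (fun _ ↦ by positivity)
    (fun i ↦ by gcongr; exact min_le_right i j) (by positivity) hj hF
    fun _ ↦ abs_stateIncrement_le hb _ j, hσ]
  calc |∫ ω, ∫ z, F (past ω, √(1 / n) • z) ∂stdGaussian _ ∂P|
      ≤ ∫ ω, |∫ z, F (past ω, √(1 / n) • z) ∂stdGaussian _| ∂P := abs_integral_le_integral_abs
    _ ≤ ∫ ω, 3 * exp b * exp (-(n / 16) * sqBessel4 γ (j / n) ω) ∂P := by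
        refine integral_mono_of_nonneg (ae_of_all _ fun _ ↦ abs_nonneg _)
          ((hγ.integrable_exp_neg_mul_sqBessel4 (by positivity) _).const_mul _)
          (ae_of_all _ fun ω ↦ ?_)
        refine (abs_integral_stateIncrement_update_le hb (sqrt_pos.2 hσ0).ne'
          (past ω) j).trans_eq ?_
        simp only [past, sq_sqrt hσ0.le, min_self, sqBessel4]
        field_simp
    _ = 3 * exp b * ((1 + (j : ℝ) / 8) ^ 2)⁻¹ := by
        rw [integral_const_mul, hγ.integral_exp_neg_mul_sqBessel4 (by positivity) (by positivity)]
        field_simp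
        ring

lemma IsStdBMVec.integrable_stateIncrement (hγ : IsStdBMVec 4 P γ) (hb : 1 ≤ b) (n j : ℕ) :
    Integrable (fun ω ↦ stateIncrement b (gridSample (fun t ↦ sqBessel4 γ t ω) n) j) P :=
  integrable_of_forall_abs_le
    ((measurable_stateIncrement b j).comp (hγ.measurable_gridSample_sqBessel4 n))
    fun _ ↦ abs_stateIncrement_le hb _ j

lemma IsStdBMVec.tendsto_integral_stateIncrement (hγ : IsStdBMVec 4 P γ) (hb : 1 ≤ b) (j : ℕ) :
    Tendsto (fun n : ℕ ↦ ∫ ω, stateIncrement b (gridSample (fun t ↦ sqBessel4 γ t ω) n) j ∂P)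
      atTop (𝓝 0) := by
  rw [← integral_zero Ω ℝ (μ := P)]
  refine tendsto_integral_of_dominated_convergence (fun _ ↦ 6 * exp b)
    (fun n ↦ (hγ.integrable_stateIncrement hb n j).aestronglyMeasurable) (integrable_const _)
    (fun n ↦ ae_of_all _ fun ω ↦ abs_stateIncrement_le hb _ j)
    (ae_of_all _ fun ω ↦ tendsto_const_nhds.congr' ?_)
  have hsmall (i : ℕ) : ∀ᶠ n : ℕ in atTop, gridSample (fun t ↦ sqBessel4 γ t ω) n i < 1 := by
    refine Tendsto.eventually_lt_const (v := sqBessel4 γ 0 ω)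
      (by simp [hγ.sqBessel4_zero]) ?_
    exact (hγ.continuous_sqBessel4 ω).continuousAt.tendsto.comp
      (tendsto_const_div_atTop_nhds_zero_nat (i : ℝ))
  filter_upwards [(finite_le_nat j).eventually_all.2 fun i _ ↦ hsmall i] with n hn
  exact (stateIncrement_of_forall_le_one hb fun i hi ↦ (hn i hi).le).symm

lemma summable_inv_one_add_div_sq {a : ℝ} (ha : 0 < a) :
    Summable fun j : ℕ ↦ ((1 + j / a) ^ 2)⁻¹ := by
  refine (((summable_one_div_nat_add_rpow a 2).2 one_lt_two).mul_left (a ^ 2)).congr fun j ↦ ?_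
  rw [abs_of_pos (by positivity), rpow_ofNat]
  field_simp
  ring

lemma IsStdBMVec.tendsto_sum_integral_stateIncrement (hγ : IsStdBMVec 4 P γ) (hb : 1 ≤ b) :
    Tendsto (fun n : ℕ ↦ ∑ j ∈ Finset.range (n ^ 2),
      ∫ ω, stateIncrement b (gridSample (fun t ↦ sqBessel4 γ t ω) n) j ∂P) atTop (𝓝 0) := by
  have h := tendsto_tsum_of_dominated_convergence (𝓕 := atTop) (g := fun _ ↦ (0 : ℝ))
    (f := fun (n : ℕ) ↦ indicator (Finset.range (n ^ 2) : Set ℕ) fun j ↦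
      ∫ ω, stateIncrement b (gridSample (fun t ↦ sqBessel4 γ t ω) n) j ∂P)
    ((summable_inv_one_add_div_sq (by norm_num : (0 : ℝ) < 8)).mul_left (3 * exp b))
    (fun j ↦ squeeze_zero_norm (fun n ↦ norm_indicator_le_norm_self _ _)
      (tendsto_norm_zero.comp (hγ.tendsto_integral_stateIncrement hb j))) ?_
  · rw [tsum_zero] at h
    exact h.congr fun n ↦ (sum_eq_tsum_indicator _ _).symm
  · filter_upwards [eventually_gt_atTop 0] with n hn j
    exact (norm_indicator_le_norm_self _ _).trans (hγ.abs_integral_stateIncrement_le hb hn j)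

lemma abs_sum_maxIncrement_le (hb : 1 ≤ b) (u : ℕ → ℝ) (N : ℕ) :
    |∑ j ∈ Finset.range N, maxIncrement b u j| ≤ exp b * b := by
  rw [abs_of_nonneg (Finset.sum_nonneg fun j _ ↦ maxIncrement_nonneg hb u j)]
  simpa using sum_maxIncrement_le hb zero_le_one (fun j _ ↦ min_le_left 1 |u (j + 1) - u j|) N

lemma IsStdBMVec.integrable_sum_maxIncrement (hγ : IsStdBMVec 4 P γ) (hb : 1 ≤ b) (n N : ℕ) :
    Integrable (fun ω ↦ ∑ j ∈ Finset.range N,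
      maxIncrement b (gridSample (fun t ↦ sqBessel4 γ t ω) n) j) P :=
  integrable_of_forall_abs_le
    (Finset.measurable_sum _ fun j _ ↦
      (measurable_maxIncrement b j).comp (hγ.measurable_gridSample_sqBessel4 n))
    fun _ ↦ abs_sum_maxIncrement_le hb _ N

lemma IsStdBMVec.tendsto_integral_sum_maxIncrement (hγ : IsStdBMVec 4 P γ) (hb : 1 ≤ b) :
    Tendsto (fun n : ℕ ↦ ∫ ω, ∑ j ∈ Finset.range (n ^ 2),
      maxIncrement b (gridSample (fun t ↦ sqBessel4 γ t ω) n) j ∂P) atTop (𝓝 0) := by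
  rw [← integral_zero Ω ℝ (μ := P)]
  refine tendsto_integral_of_dominated_convergence (fun _ ↦ exp b * b)
    (fun n ↦ (hγ.integrable_sum_maxIncrement hb n _).aestronglyMeasurable) (integrable_const _)
    (fun n ↦ ae_of_all _ fun ω ↦ abs_sum_maxIncrement_le hb _ _) ?_
  filter_upwards [hγ.ae_exists_lt_sqBessel4] with ω hω
  exact tendsto_sum_maxIncrement_gridSample (hγ.continuous_sqBessel4 ω) (hω b) hb

lemma IsStdBMVec.tendsto_integral_stoppedAzemaYor (hγ : IsStdBMVec 4 P γ) (hb : 1 ≤ b) :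
    Tendsto (fun n : ℕ ↦
      ∫ ω, stoppedAzemaYor b (gridSample (fun t ↦ sqBessel4 γ t ω) n) (n ^ 2) ∂P)
      atTop (𝓝 (exp 1)) := by
  have hzero (ω : Ω) (n : ℕ) : gridSample (fun t ↦ sqBessel4 γ t ω) n 0 ≤ 1 := by
    simp [gridSample, hγ.sqBessel4_zero]
  have hmean (n : ℕ) :
      ∫ ω, stoppedAzemaYor b (gridSample (fun t ↦ sqBessel4 γ t ω) n) (n ^ 2) ∂P =
        exp 1 + (∑ j ∈ Finset.range (n ^ 2),
          ∫ ω, stateIncrement b (gridSample (fun t ↦ sqBessel4 γ t ω) n) j ∂P) +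
        ∫ ω, ∑ j ∈ Finset.range (n ^ 2),
          maxIncrement b (gridSample (fun t ↦ sqBessel4 γ t ω) n) j ∂P := by
    simp_rw [fun ω ↦ stoppedAzemaYor_eq_add hb (hzero ω n) (n ^ 2)]
    have hint := integrable_finsetSum (Finset.range (n ^ 2)) fun j _ ↦
      hγ.integrable_stateIncrement hb n j
    rw [integral_add ((integrable_const _).fun_add hint) (hγ.integrable_sum_maxIncrement hb n _),
      integral_add (integrable_const _) hint,
      integral_finsetSum _ fun j _ ↦ hγ.integrable_stateIncrement hb n j]
    simp
  simp_rw [hmean]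
  simpa using ((hγ.tendsto_sum_integral_stateIncrement hb).const_add (exp 1)).add
    (hγ.tendsto_integral_sum_maxIncrement hb)

end SquaredBessel

/-! ### The law at the first drawdown -/

section Law

lemma PassesBeforeDrawdown.of_scale {c lam a : ℝ} {f : ℝ → ℝ} (hc : 0 < c)
    (h : PassesBeforeDrawdown (lam / c) (fun t ↦ f (c * t) / c) (a / c)) :
    PassesBeforeDrawdown lam f a := by
  rintro t ⟨s, ⟨hs, hst⟩, hdrop⟩
  have hscaled : lam / c ≤ f (c * (s / c)) / c - f (c * (t / c)) / c := by
    rw [mul_div_cancel₀ _ hc.ne', mul_div_cancel₀ _ hc.ne', ← sub_div]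
    exact div_le_div_of_nonneg_right hdrop hc.le
  obtain ⟨r, hr, har⟩ := h (t / c)
    ⟨s / c, ⟨div_nonneg hs hc.le, div_le_div_of_nonneg_right hst hc.le⟩, hscaled⟩
  refine ⟨c * r, ⟨mul_nonneg hc.le hr.1, ?_⟩, (div_lt_div_iff_of_pos_right hc).1 har⟩
  rw [mul_comm]
  exact (le_div_iff₀ hc).1 hr.2

variable {Ω : Type*} [MeasurableSpace Ω] {P : Measure Ω} {γ : ℝ → Ω → EuclideanSpace ℝ (Fin 4)}
  {a b lam : ℝ}

lemma IsStdBMVec.measurable_stoppedAzemaYor (hγ : IsStdBMVec 4 P γ) (b : ℝ) (n N : ℕ) :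
    Measurable fun ω ↦ stoppedAzemaYor b (gridSample (fun t ↦ sqBessel4 γ t ω) n) N :=
  (_root_.measurable_stoppedAzemaYor b N).comp (hγ.measurable_gridSample_sqBessel4 n)

lemma le_integral_of_eventually_le_add [IsFiniteMeasure P] {Z : ℕ → Ω → ℝ} {V : Ω → ℝ} {C L : ℝ}
    (hZ : ∀ n, Measurable (Z n)) (hZC : ∀ n ω, |Z n ω| ≤ C) (hV : Integrable V P)
    (hlim : Tendsto (fun n ↦ ∫ ω, Z n ω ∂P) atTop (𝓝 L))
    (h : ∀ᵐ ω ∂P, ∀ η > 0, ∀ᶠ n in atTop, Z n ω ≤ V ω + η) : L ≤ ∫ ω, V ω ∂P := by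
  have hint (n : ℕ) : Integrable (Z n) P := integrable_of_forall_abs_le (hZ n) (hZC n)
  have hmax : Tendsto (fun n ↦ ∫ ω, max (Z n ω) (V ω) ∂P) atTop (𝓝 (∫ ω, V ω ∂P)) := by
    refine tendsto_integral_of_dominated_convergence (fun ω ↦ C + |V ω|)
      (fun n ↦ ((hint n).sup hV).aestronglyMeasurable) ((integrable_const C).add hV.abs)
      (fun n ↦ ae_of_all _ fun ω ↦ ?_) ?_
    · exact abs_max_le_max_abs_abs.trans <| (max_le_add_of_nonneg (abs_nonneg _)
        (abs_nonneg _)).trans (add_le_add_left (hZC n ω) _)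
    · filter_upwards [h] with ω hω
      refine tendsto_order.2 ⟨fun x hx ↦ .of_forall fun n ↦ hx.trans_le (le_max_right _ _),
        fun x hx ↦ ?_⟩
      filter_upwards [hω ((x - V ω) / 2) (by linarith)] with n hn
      exact max_lt (by linarith) hx
  exact le_of_tendsto_of_tendsto' hlim hmax fun n ↦
    integral_mono (hint n) ((hint n).sup hV) fun ω ↦ le_max_left _ _

variable [IsProbabilityMeasure P]

lemma IsStdBMVec.measureReal_not_passesBeforeDrawdown_le_of_lt (hγ : IsStdBMVec 4 P γ)
    (hlam : 1 < lam) (hb : 1 < b) (hab : a < b) :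
    P.real {ω | ¬PassesBeforeDrawdown lam (fun t ↦ sqBessel4 γ t ω) a} ≤
      1 - b * exp (1 - b) := by
  let Z (n : ℕ) (ω : Ω) : ℝ := stoppedAzemaYor b (gridSample (fun t ↦ sqBessel4 γ t ω) n) (n ^ 2)
  have hZ (n : ℕ) : Measurable (Z n) := hγ.measurable_stoppedAzemaYor b n (n ^ 2)
  let S : Set Ω := limsup (fun n ↦ {ω | 0 < Z n ω}) atTop
  have hS : MeasurableSet S :=
    .measurableSet_limsup fun n ↦ measurableSet_lt measurable_const (hZ n)
  have hsub : {ω | ¬PassesBeforeDrawdown lam (fun t ↦ sqBessel4 γ t ω) a} ⊆ Sᶜ := fun ω hω ↦ by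
    simpa [S, Z, mem_limsup_iff_frequently_mem] using
      eventually_stoppedAzemaYor_nonpos (hγ.continuous_sqBessel4 ω)
        (fun t ↦ sqBessel4_nonneg γ t ω) hb hlam hab hω
  have hmean : exp 1 ≤ ∫ ω, S.indicator (fun _ ↦ exp b / b) ω ∂P := by
    refine le_integral_of_eventually_le_add hZ (fun n ω ↦ abs_stoppedAzemaYor_le hb.le _ _)
      ((integrable_const _).indicator hS) (hγ.tendsto_integral_stoppedAzemaYor hb.le) ?_
    filter_upwards [hγ.ae_exists_lt_sqBessel4] with ω hω η hη
    by_cases hωS : ω ∈ S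
    · rw [indicator_of_mem hωS]
      refine eventually_stoppedAzemaYor_le (hγ.continuous_sqBessel4 ω) (hω b) hb ?_ hη
      rw [hγ.sqBessel4_zero]
      linarith
    · rw [indicator_of_notMem hωS]
      filter_upwards [not_frequently.1 (mt mem_limsup_iff_frequently_mem.2 hωS)] with n hn
      rw [zero_add]
      exact (not_lt.1 hn).trans hη.le
  rw [integral_indicator_const _ hS, smul_eq_mul] at hmean
  refine (measureReal_mono hsub).trans ?_
  rw [probReal_compl_eq_one_sub hS, exp_sub]
  gcongr
  calc b * (exp 1 / exp b) ≤ b * (P.real S * (exp b / b) / exp b) := by gcongr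
    _ = P.real S := by field_simp

lemma IsStdBMVec.measureReal_not_passesBeforeDrawdown_le (hγ : IsStdBMVec 4 P γ) (ha : 1 ≤ a) :
    P.real {ω | ¬PassesBeforeDrawdown 1 (fun t ↦ sqBessel4 γ t ω) a} ≤ 1 - a * exp (1 - a) := by
  have hlim : Tendsto (fun b ↦ 1 - b * exp (1 - b)) (𝓝[>] a) (𝓝 (1 - a * exp (1 - a))) :=
    tendsto_nhdsWithin_of_tendsto_nhds (Continuous.tendsto (by fun_prop) a)
  refine ge_of_tendsto hlim (eventually_nhdsWithin_of_forall fun b hab ↦ ?_)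
  have hb : 1 < b := ha.trans_lt hab
  obtain ⟨c, hac, hc1⟩ := exists_between ((div_lt_one (zero_lt_one.trans hb)).2 hab)
  have hc : 0 < c := lt_of_le_of_lt (by positivity) hac
  refine (measureReal_mono (ofPred_subset_ofPred.2 fun ω hω hscaled ↦ hω (.of_scale hc ?_))).trans
    ((hγ.scale hc).measureReal_not_passesBeforeDrawdown_le_of_lt ((one_lt_div hc).2 hc1) hb
      ((div_lt_comm₀ hc (by positivity)).2 hac))
  simpa only [sqBessel4_scale γ hc.le] using hscaled

lemma IsStdBMVec.ae_exists_passesBeforeDrawdown (hγ : IsStdBMVec 4 P γ) :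
    ∀ᵐ ω ∂P, ∃ ε > 0, PassesBeforeDrawdown 1 (fun t ↦ sqBessel4 γ t ω) (1 + ε) := by
  have hlim : Tendsto (fun ε : ℝ ↦ 1 - (1 + ε) * exp (1 - (1 + ε))) (𝓝[>] 0) (𝓝 0) :=
    tendsto_nhdsWithin_of_tendsto_nhds (Continuous.tendsto' (by fun_prop) 0 0 (by simp))
  rw [ae_iff, ← measureReal_eq_zero_iff]
  refine le_antisymm (ge_of_tendsto hlim (eventually_nhdsWithin_of_forall fun ε hε ↦ ?_))
    measureReal_nonneg
  exact (measureReal_mono (ofPred_subset_ofPred.2 fun ω hω hpass ↦ hω ⟨ε, hε, hpass⟩)).trans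
    (hγ.measureReal_not_passesBeforeDrawdown_le (le_add_of_nonneg_right (le_of_lt hε)))

lemma IsStdBMVec.measureReal_passesBeforeDrawdown_le (hγ : IsStdBMVec 4 P γ) (hb : 1 < b) :
    P.real {ω | PassesBeforeDrawdown 1 (fun t ↦ sqBessel4 γ t ω) b} ≤ b * exp (1 - b) := by
  let Z (n : ℕ) (ω : Ω) : ℝ := stoppedAzemaYor b (gridSample (fun t ↦ sqBessel4 γ t ω) n) (n ^ 2)
  have hZ (n : ℕ) : Measurable (Z n) := hγ.measurable_stoppedAzemaYor b n (n ^ 2)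
  let S : Set Ω := liminf (fun n ↦ {ω | exp b / b ≤ Z n ω}) atTop
  have hS : MeasurableSet S :=
    .measurableSet_liminf fun n ↦ measurableSet_le measurable_const (hZ n)
  have hsub : {ω | PassesBeforeDrawdown 1 (fun t ↦ sqBessel4 γ t ω) b} ≤ᵐ[P] S := by
    filter_upwards [hγ.ae_exists_lt_sqBessel4] with ω hω hpass
    exact mem_liminf_iff_eventually_mem.2 <|
      eventually_le_stoppedAzemaYor (hγ.continuous_sqBessel4 ω) (hω b) hb hpass
  have hmean : -exp 1 ≤ ∫ ω, S.indicator (fun _ ↦ -(exp b / b)) ω ∂P := by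
    refine le_integral_of_eventually_le_add (fun n ↦ (hZ n).neg)
      (fun n ω ↦ (abs_neg _).trans_le (abs_stoppedAzemaYor_le hb.le _ _))
      ((integrable_const _).indicator hS) ?_ ?_
    · simpa only [Pi.neg_apply, integral_neg] using
        (hγ.tendsto_integral_stoppedAzemaYor hb.le).neg
    · filter_upwards [hγ.ae_exists_lt_sqBessel4, hγ.ae_exists_passesBeforeDrawdown]
        with ω hω ⟨ε, hε, hpass⟩ η hη
      by_cases hωS : ω ∈ S
      · rw [indicator_of_mem hωS]
        filter_upwards [mem_liminf_iff_eventually_mem.1 hωS] with n hn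
        exact (neg_le_neg hn).trans (le_add_of_nonneg_right hη.le)
      · rw [indicator_of_notMem hωS, zero_add]
        filter_upwards [eventually_neg_le_stoppedAzemaYor (hγ.continuous_sqBessel4 ω) (hω b) hb
          hε hpass hη] with n hn
        exact neg_le.1 hn
  rw [integral_indicator_const _ hS, smul_eq_mul, mul_neg, neg_le_neg_iff] at hmean
  calc P.real {ω | PassesBeforeDrawdown 1 (fun t ↦ sqBessel4 γ t ω) b}
      ≤ P.real S := ENNReal.toReal_mono (measure_ne_top _ _) (measure_mono_ae hsub)
    _ = b * (P.real S * (exp b / b) / exp b) := by field_simp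
    _ ≤ b * (exp 1 / exp b) := by gcongr
    _ = b * exp (1 - b) := by rw [exp_sub]

lemma IsStdBMVec.measureReal_passesBeforeDrawdown (hγ : IsStdBMVec 4 P γ) (hb : 1 < b) :
    P.real {ω | PassesBeforeDrawdown 1 (fun t ↦ sqBessel4 γ t ω) b} = b * exp (1 - b) := by
  refine le_antisymm (hγ.measureReal_passesBeforeDrawdown_le hb) ?_
  have hcover := measureReal_union_le (μ := P)
    {ω | PassesBeforeDrawdown 1 (fun t ↦ sqBessel4 γ t ω) b}
    {ω | ¬PassesBeforeDrawdown 1 (fun t ↦ sqBessel4 γ t ω) b}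
  rw [← compl_ofPred, union_compl_self, probReal_univ, compl_ofPred] at hcover
  linarith [hγ.measureReal_not_passesBeforeDrawdown_le hb.le]

lemma IsStdBMVec.ae_drawdownTimes_nonempty (hγ : IsStdBMVec 4 P γ) :
    ∀ᵐ ω ∂P, (drawdownTimes 1 fun t ↦ sqBessel4 γ t ω).Nonempty := by
  have hlim : Tendsto (fun b ↦ b * exp (1 - b)) atTop (𝓝 0) := by
    simpa [sub_eq_add_neg, exp_add, mul_left_comm] using
      (tendsto_pow_mul_exp_neg_atTop_nhds_zero 1).const_mul (exp 1)
  rw [ae_iff, ← measureReal_eq_zero_iff]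
  refine le_antisymm (ge_of_tendsto hlim ((eventually_gt_atTop 1).mono fun b hb ↦ ?_))
    measureReal_nonneg
  exact (measureReal_mono fun ω hω t ht ↦ (hω ⟨t, ht⟩).elim).trans_eq
    (hγ.measureReal_passesBeforeDrawdown hb)

end Law

end

/-- for a squared four-dimensional Bessel process `U` started at `0` and
`τ₁ := inf {t ≥ 0 : Ū(t) - U(t) ≥ 1}`, one has `P{U(τ₁) > a} = (a+1) e^{-a}` for all `a > 0`. -/
theorem sqBessel4_at_drawdown_time_law
    {Ω : Type*} [MeasurableSpace Ω] (P : Measure Ω) [IsProbabilityMeasure P]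
    (γ : ℝ → Ω → EuclideanSpace ℝ (Fin 4)) (hγ : IsStdBMVec 4 P γ)
    (a : ℝ) (ha : 0 < a) :
    P {ω | a < sqBessel4 γ (ddTime 1 (sqBessel4 γ) ω) ω}
      = ENNReal.ofReal ((a + 1) * Real.exp (-a)) := by
  calc P {ω | a < sqBessel4 γ (ddTime 1 (sqBessel4 γ) ω) ω}
      = P {ω | PassesBeforeDrawdown 1 (fun t ↦ sqBessel4 γ t ω) (a + 1)} := by
        refine measure_congr ?_
        filter_upwards [hγ.ae_drawdownTimes_nonempty] with ω hω
        have hcont := hγ.continuous_sqBessel4 ω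
        refine propext ?_
        change a < sqBessel4 γ (ddTime 1 (sqBessel4 γ) ω) ω ↔ _
        rw [ddTime_eq_sInf_drawdownTimes hcont]
        exact lt_apply_iff_passesBeforeDrawdown zero_le_one hcont
          (isLeast_sInf_drawdownTimes hcont hω)
    _ = ENNReal.ofReal ((a + 1) * exp (1 - (a + 1))) := by
        rw [← hγ.measureReal_passesBeforeDrawdown (by linarith), ofReal_measureReal]
    _ = ENNReal.ofReal ((a + 1) * exp (-a)) := by
        rw [sub_add_cancel_right]
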